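/- arXiv:1811.03827 — 5 statements merged into one kernel-verified Lean document; each statement's English description precedes it below -/
import Mathlib

section
/- Let μ and ν be two finite Borel measures on ℝ with finite first moments, and let F and G be their distribution functions. Then the following are equivalent: (1) μ(ℝ) = ν(ℝ) and ((F−G)*(F−G))(A) ≥ 0 for every A ∈ ℝ; (2) μ*ν ≼_cx (1/2)(μ*μ + ν*ν). -/
open MeasureTheory Set

noncomputable def distFun (μ : Measure ℝ) (x : ℝ) : ℝ := (μ (Set.Iic x)).toReal

/-- Convolution of two real functions with respect to Lebesgue measure. -/
noncomputable def fconv (h₁ h₂ : ℝ → ℝ) (A : ℝ) : ℝ := ∫ t, h₁ t * h₂ (A - t)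

/-- Convex order for finite Borel measures on ℝ. -/
def ConvexOrder (μ ν : Measure ℝ) : Prop :=
  ∀ φ : ℝ → ℝ, ConvexOn ℝ Set.univ φ → Integrable φ μ → Integrable φ ν →
    ∫ x, φ x ∂μ ≤ ∫ x, φ x ∂ν

/-- Usual stochastic order: `μ ≤ₛₜ ν`. -/
def StochOrder (μ ν : Measure ℝ) : Prop :=
  μ Set.univ = ν Set.univ ∧ ∀ x : ℝ, distFun ν x ≤ distFun μ x

/-- k-fold convolution power of a measure. -/
noncomputable def convPow (μ : Measure ℝ) : ℕ → Measure ℝ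
  | 0 => Measure.dirac 0
  | n + 1 => Measure.conv (convPow μ n) μ

/-- Convolution of a list of measures. -/
noncomputable def convList : List (Measure ℝ) → Measure ℝ
  | [] => Measure.dirac 0
  | m :: l => Measure.conv m (convList l)

/-- Convolution polynomial of measures associated with a multivariate polynomial
with non-negative coefficients. -/
noncomputable def convPoly {m : ℕ} (P : MvPolynomial (Fin m) ℝ) (μ : Fin m → Measure ℝ) :
    Measure ℝ :=
  ∑ d ∈ P.support,
    ENNReal.ofReal (MvPolynomial.coeff d P) • convList (List.ofFn fun i => convPow (μ i) (d i))

/-!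
By bilinearity of convolution and Tonelli, `(F - G) * (F - G)` at `A` is twice the difference of the
lower partial moments `∫ max (A - z) 0` of `½ (μ ∗ μ + ν ∗ ν)` and of `μ ∗ ν`. A convex function is
the sum of an affine function and a mixture, over its second derivative measure, of the functions
`x ↦ max (x - a) 0` and `x ↦ max (a - x) 0`. Hence the convex order amounts to equality of the
masses and of the first moments together with an inequality of lower partial moments. The two masses
differ by `½ (μ ℝ - ν ℝ) ^ 2`, and once `μ ℝ = ν ℝ` the first moments agree automatically.
-/

section Tonelli

variable {α β : Type*} [MeasurableSpace α] [MeasurableSpace β]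

theorem lintegral_measure_section_comm (μ : Measure α) (ν : Measure β) [SFinite μ] [SFinite ν]
    {S : Set (α × β)} (hS : MeasurableSet S) :
    ∫⁻ x, ν (Prod.mk x ⁻¹' S) ∂μ = ∫⁻ y, μ ((fun x ↦ (x, y)) ⁻¹' S) ∂ν :=
  (Measure.prod_apply hS).symm.trans (Measure.prod_apply_symm hS)

theorem setLIntegral_eq_of_subset_of_forall_diff_eq_zero {μ : Measure α} {f : α → ENNReal}
    {s t : Set α} (hs : MeasurableSet s) (ht : MeasurableSet t) (hst : s ⊆ t)
    (hf : ∀ x ∈ t \ s, f x = 0) : ∫⁻ x in t, f x ∂μ = ∫⁻ x in s, f x ∂μ := by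
  rw [← lintegral_inter_add_sdiff f t hs, inter_eq_right.2 hst,
    setLIntegral_eq_zero (ht.diff hs) hf, add_zero]

variable (μ ν : Measure ℝ) [SFinite μ] [SFinite ν]

theorem setLIntegral_measure_Ioc_left (c x : ℝ) :
    ∫⁻ t in Iic x, ν (Ioc c t) ∂μ = ∫⁻ a in Ioi c, μ (Icc a x) ∂ν := by
  have hS : MeasurableSet {p : ℝ × ℝ | p.2 ≤ p.1} := measurableSet_le (by fun_prop) (by fun_prop)
  convert lintegral_measure_section_comm (μ.restrict (Iic x)) (ν.restrict (Ioi c)) hS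
    using 3 with t a
  · rw [Measure.restrict_apply (hS.preimage (by fun_prop))]
    congr 1
    ext a
    exact and_comm
  · rw [Measure.restrict_apply (hS.preimage (by fun_prop))]
    rfl

theorem setLIntegral_measure_Ioc_right (c x : ℝ) :
    ∫⁻ t in Ioi x, ν (Ioc t c) ∂μ = ∫⁻ a in Iic c, μ (Ioo x a) ∂ν := by
  have hS : MeasurableSet {p : ℝ × ℝ | p.1 < p.2} := measurableSet_lt (by fun_prop) (by fun_prop)
  convert lintegral_measure_section_comm (μ.restrict (Ioi x)) (ν.restrict (Iic c)) hS
    using 3 with t a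
  · rw [Measure.restrict_apply (hS.preimage (by fun_prop))]
    rfl
  · rw [Measure.restrict_apply (hS.preimage (by fun_prop))]
    congr 1
    ext t
    exact and_comm

theorem lintegral_measure_Iic_mul_measure_Iic_sub (A : ℝ) :
    ∫⁻ t, μ (Iic t) * ν (Iic (A - t)) = ∫⁻ z, ENNReal.ofReal (A - z) ∂(μ ∗ ν) := by
  have hS : MeasurableSet {q : ℝ × ℝ × ℝ | q.2 ∈ Iic q.1 ×ˢ Iic (A - q.1)} :=
    (measurableSet_le (by fun_prop) (by fun_prop)).inter
      (measurableSet_le (by fun_prop) (by fun_prop))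
  have section_eq (p : ℝ × ℝ) :
      (fun t ↦ (t, p)) ⁻¹' {q : ℝ × ℝ × ℝ | q.2 ∈ Iic q.1 ×ˢ Iic (A - q.1)} =
        Icc p.1 (A - p.2) := by
    ext t
    exact and_congr_right fun _ ↦ (le_sub_comm : p.2 ≤ A - t ↔ _)
  calc ∫⁻ t, μ (Iic t) * ν (Iic (A - t))
      = ∫⁻ t, μ.prod ν (Iic t ×ˢ Iic (A - t)) := by simp_rw [Measure.prod_prod]
    _ = ∫⁻ p, volume (Icc p.1 (A - p.2)) ∂(μ.prod ν) := by
      simp_rw [← section_eq]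
      exact lintegral_measure_section_comm volume (μ.prod ν) hS
    _ = ∫⁻ p, ENNReal.ofReal (A - (p.1 + p.2)) ∂(μ.prod ν) := by
      simp_rw [Real.volume_Icc, sub_sub, add_comm]
    _ = ∫⁻ z, ENNReal.ofReal (A - z) ∂(μ ∗ ν) := by
      rw [Measure.lintegral_conv_eq_lintegral_sum (by fun_prop)]

end Tonelli

section SecondDerivative

theorem intervalIntegral_sub_base_nonneg {g : ℝ → ℝ} (hg : Monotone g) (c x : ℝ) :
    0 ≤ ∫ t in c..x, (g t - g c) := by
  rcases le_total c x with hcx | hxc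
  · exact intervalIntegral.integral_nonneg hcx fun t ht ↦ sub_nonneg.2 (hg ht.1)
  · rw [intervalIntegral.integral_symm, ← intervalIntegral.integral_neg]
    exact intervalIntegral.integral_nonneg hxc fun t ht ↦ by linarith [hg ht.2]

theorem ofReal_intervalIntegral {f : ℝ → ℝ} {a b : ℝ} (hab : a ≤ b)
    (hf : IntervalIntegrable f volume a b) (hf₀ : ∀ t ∈ Ioc a b, 0 ≤ f t) :
    ENNReal.ofReal (∫ t in a..b, f t) = ∫⁻ t in Ioc a b, ENNReal.ofReal (f t) := by
  rw [intervalIntegral.integral_of_le hab]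
  exact ofReal_integral_eq_lintegral_ofReal hf.1 (ae_restrict_of_forall_mem measurableSet_Ioc hf₀)

theorem ofReal_intervalIntegral_sub_base {g : ℝ → ℝ} (hg : Monotone g) (c x : ℝ) :
    ENNReal.ofReal (∫ t in c..x, (g t - g c)) =
      (∫⁻ t in Iic x, ENNReal.ofReal (g t - g c)) +
        ∫⁻ t in Ioi x, ENNReal.ofReal (g c - g t) := by
  have hint (a b : ℝ) : IntervalIntegrable g volume a b := hg.intervalIntegrable
  rcases le_total c x with hcx | hxc
  · have right_zero : ∫⁻ t in Ioi x, ENNReal.ofReal (g c - g t) = 0 :=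
      setLIntegral_eq_zero measurableSet_Ioi fun t ht ↦
        ENNReal.ofReal_of_nonpos (sub_nonpos.2 (hg (hcx.trans (le_of_lt ht))))
    rw [right_zero, add_zero, setLIntegral_eq_of_subset_of_forall_diff_eq_zero
      measurableSet_Ioc measurableSet_Iic (Ioc_subset_Iic_self : Ioc c x ⊆ _)]
    · exact ofReal_intervalIntegral hcx ((hint c x).sub intervalIntegrable_const)
        fun t ht ↦ sub_nonneg.2 (hg ht.1.le)
    · rintro t ⟨htx, htc⟩
      exact ENNReal.ofReal_of_nonpos (sub_nonpos.2 (hg (not_lt.1 fun h ↦ htc ⟨h, htx⟩)))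
  · have left_zero : ∫⁻ t in Iic x, ENNReal.ofReal (g t - g c) = 0 :=
      setLIntegral_eq_zero measurableSet_Iic fun t ht ↦
        ENNReal.ofReal_of_nonpos (sub_nonpos.2 (hg (le_trans ht hxc)))
    rw [left_zero, zero_add, setLIntegral_eq_of_subset_of_forall_diff_eq_zero
      measurableSet_Ioc measurableSet_Ioi (Ioc_subset_Ioi_self : Ioc x c ⊆ _),
      intervalIntegral.integral_symm, ← intervalIntegral.integral_neg]
    · simp_rw [neg_sub]
      exact ofReal_intervalIntegral hxc (intervalIntegrable_const.sub (hint x c))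
        fun t ht ↦ sub_nonneg.2 (hg ht.2)
    · rintro t ⟨hxt, htc⟩
      exact ENNReal.ofReal_of_nonpos
        (sub_nonpos.2 (hg (le_of_lt (not_le.1 fun h ↦ htc ⟨hxt, h⟩))))

theorem ofReal_intervalIntegral_sub_base_eq_lintegral_measure (g : StieltjesFunction ℝ) (c x : ℝ) :
    ENNReal.ofReal (∫ t in c..x, (g t - g c)) =
      ∫⁻ a in Ioi c, ENNReal.ofReal (x - a) ∂g.measure +
        ∫⁻ a in Iic c, ENNReal.ofReal (a - x) ∂g.measure := by
  rw [ofReal_intervalIntegral_sub_base g.mono]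
  simp_rw [← g.measure_Ioc, setLIntegral_measure_Ioc_left, setLIntegral_measure_Ioc_right,
    Real.volume_Icc, Real.volume_Ioo]

theorem lintegral_ofReal_intervalIntegral_sub_base (g : StieltjesFunction ℝ) (c : ℝ)
    (ρ : Measure ℝ) [SFinite ρ] :
    ∫⁻ x, ENNReal.ofReal (∫ t in c..x, (g t - g c)) ∂ρ =
      ∫⁻ a in Ioi c, ∫⁻ x, ENNReal.ofReal (x - a) ∂ρ ∂g.measure +
        ∫⁻ a in Iic c, ∫⁻ x, ENNReal.ofReal (a - x) ∂ρ ∂g.measure := by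
  have hmeas : Measurable fun x ↦ ∫⁻ a in Ioi c, ENNReal.ofReal (x - a) ∂g.measure :=
    Measurable.lintegral_prod_right (f := fun x a ↦ ENNReal.ofReal (x - a)) (by fun_prop)
  simp_rw [ofReal_intervalIntegral_sub_base_eq_lintegral_measure]
  rw [lintegral_add_left hmeas]
  congr 1 <;> exact lintegral_lintegral_swap (by fun_prop)

theorem intervalIntegral_stieltjesFunction {f : ℝ → ℝ} (hf : Monotone f) (a b : ℝ) :
    ∫ t in a..b, hf.stieltjesFunction t = ∫ t in a..b, f t := by
  refine intervalIntegral.integral_congr_ae ?_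
  filter_upwards [hf.countable_not_continuousAt.ae_notMem volume] with t ht _
  rw [hf.stieltjesFunction_eq]
  exact (not_not.1 ht).continuousWithinAt.rightLim_eq

theorem exists_stieltjesFunction_intervalIntegral_eq_sub {φ : ℝ → ℝ} (hφ : ConvexOn ℝ univ φ) :
    ∃ g : StieltjesFunction ℝ, ∀ a b, ∫ t in a..b, g t = φ b - φ a := by
  have hmono : Monotone fun x ↦ derivWithin φ (Ioi x) x := by
    simpa only [interior_univ, monotoneOn_univ] using hφ.monotoneOn_rightDeriv
  have hcont : Continuous φ := by
    simpa only [interior_univ, continuousOn_univ] using hφ.continuousOn_interior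
  refine ⟨hmono.stieltjesFunction, fun a b ↦ ?_⟩
  rw [intervalIntegral_stieltjesFunction hmono]
  exact intervalIntegral.integral_eq_sub_of_hasDeriv_right hcont.continuousOn
    (fun x _ ↦ hφ.hasDerivWithinAt_rightDeriv_of_mem_interior (by simp)) hmono.intervalIntegrable

end SecondDerivative

section LowerPartialMoment

/-- The first lower partial moment `∫ (A - z)⁺ ∂ρ` of a measure on the line, as a function of the
threshold `A`; it is the integrated distribution function of `ρ`, and the convex order is read off
from it. -/
noncomputable def lowerPartialMoment (ρ : Measure ℝ) (A : ℝ) : ℝ := ∫ z, max (A - z) 0 ∂ρ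

theorem convexOn_max_sub_zero (A : ℝ) : ConvexOn ℝ univ fun z : ℝ ↦ max (A - z) 0 :=
  ((convexOn_const A convex_univ).sub (concaveOn_id convex_univ)).sup (convexOn_const 0 convex_univ)

theorem lowerPartialMoment_eq_toReal_lintegral (ρ : Measure ℝ) (A : ℝ) :
    lowerPartialMoment ρ A = (∫⁻ z, ENNReal.ofReal (A - z) ∂ρ).toReal := by
  rw [lowerPartialMoment, integral_eq_lintegral_of_nonneg_ae
    (ae_of_all _ fun z ↦ le_max_right (A - z) 0) (by fun_prop)]
  simp only [ENNReal.ofReal_max, ENNReal.ofReal_zero, zero_le, sup_of_le_left]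

variable {ρ P Q : Measure ℝ} [IsFiniteMeasure ρ] [IsFiniteMeasure P] [IsFiniteMeasure Q]

theorem integrable_max_sub_zero (hρ : Integrable (fun x ↦ x) ρ) (A : ℝ) :
    Integrable (fun z ↦ max (A - z) 0) ρ :=
  ((integrable_const A).sub hρ).pos_part

theorem lintegral_ofReal_const_sub (hρ : Integrable (fun x ↦ x) ρ) (a : ℝ) :
    ∫⁻ x, ENNReal.ofReal (a - x) ∂ρ = ENNReal.ofReal (lowerPartialMoment ρ a) := by
  rw [lowerPartialMoment, ofReal_integral_eq_lintegral_ofReal (integrable_max_sub_zero hρ a)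
    (ae_of_all _ fun z ↦ le_max_right (a - z) 0)]
  simp only [ENNReal.ofReal_max, ENNReal.ofReal_zero, zero_le, sup_of_le_left]

theorem lintegral_ofReal_sub_const (hρ : Integrable (fun x ↦ x) ρ) (a : ℝ) :
    ∫⁻ x, ENNReal.ofReal (x - a) ∂ρ =
      ENNReal.ofReal (lowerPartialMoment ρ a + (∫ x, x ∂ρ - ρ.real univ * a)) := by
  have hsub : Integrable (fun x ↦ x - a) ρ := hρ.sub (integrable_const a)
  have parity (x : ℝ) : max (x - a) 0 = max (a - x) 0 + (x - a) := by
    rw [← neg_sub x a]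
    linarith [max_zero_sub_max_neg_zero_eq_self (x - a)]
  calc ∫⁻ x, ENNReal.ofReal (x - a) ∂ρ
      = ∫⁻ x, ENNReal.ofReal (max (x - a) 0) ∂ρ := by
        simp only [ENNReal.ofReal_max, ENNReal.ofReal_zero, zero_le, sup_of_le_left]
    _ = ENNReal.ofReal (∫ x, max (x - a) 0 ∂ρ) :=
      (ofReal_integral_eq_lintegral_ofReal hsub.pos_part
        (ae_of_all _ fun z ↦ le_max_right (z - a) 0)).symm
    _ = _ := by
      simp_rw [parity]
      rw [integral_add (integrable_max_sub_zero hρ a) hsub, integral_sub hρ (integrable_const a),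
        integral_const, smul_eq_mul, lowerPartialMoment]

theorem integral_const_add_mul (hρ : Integrable (fun x ↦ x) ρ) (a b : ℝ) :
    ∫ x, (a + b * x) ∂ρ = ρ.real univ * a + b * ∫ x, x ∂ρ := by
  rw [integral_add (integrable_const a) (hρ.const_mul b), integral_const, integral_const_mul,
    smul_eq_mul]

theorem integral_intervalIntegral_sub_base_le (hP : Integrable (fun x ↦ x) P)
    (hQ : Integrable (fun x ↦ x) Q) (hmass : P.real univ = Q.real univ)
    (hmean : ∫ x, x ∂P = ∫ x, x ∂Q)
    (hlpm : ∀ A, lowerPartialMoment P A ≤ lowerPartialMoment Q A) (g : StieltjesFunction ℝ) (c : ℝ)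
    (hgP : Integrable (fun x ↦ ∫ t in c..x, (g t - g c)) P)
    (hgQ : Integrable (fun x ↦ ∫ t in c..x, (g t - g c)) Q) :
    ∫ x, (∫ t in c..x, (g t - g c)) ∂P ≤ ∫ x, (∫ t in c..x, (g t - g c)) ∂Q := by
  have nonneg := intervalIntegral_sub_base_nonneg g.mono c
  rw [← ENNReal.ofReal_le_ofReal_iff (integral_nonneg nonneg),
    ofReal_integral_eq_lintegral_ofReal hgP (ae_of_all _ nonneg),
    ofReal_integral_eq_lintegral_ofReal hgQ (ae_of_all _ nonneg),
    lintegral_ofReal_intervalIntegral_sub_base, lintegral_ofReal_intervalIntegral_sub_base]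
  simp_rw [lintegral_ofReal_sub_const hP, lintegral_ofReal_sub_const hQ,
    lintegral_ofReal_const_sub hP, lintegral_ofReal_const_sub hQ, hmass, hmean]
  gcongr <;> exact hlpm _

theorem integral_le_integral_of_convexOn (hP : Integrable (fun x ↦ x) P)
    (hQ : Integrable (fun x ↦ x) Q) (hmass : P.real univ = Q.real univ)
    (hmean : ∫ x, x ∂P = ∫ x, x ∂Q)
    (hlpm : ∀ A, lowerPartialMoment P A ≤ lowerPartialMoment Q A) {φ : ℝ → ℝ}
    (hφ : ConvexOn ℝ univ φ) (hφP : Integrable φ P) (hφQ : Integrable φ Q) :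
    ∫ x, φ x ∂P ≤ ∫ x, φ x ∂Q := by
  obtain ⟨g, hg⟩ := exists_stieltjesFunction_intervalIntegral_eq_sub hφ
  have remainder_eq (x : ℝ) : ∫ t in (0 : ℝ)..x, (g t - g 0) = φ x - (φ 0 + g 0 * x) := by
    rw [intervalIntegral.integral_sub g.mono.intervalIntegrable intervalIntegrable_const, hg,
      intervalIntegral.integral_const, smul_eq_mul]
    ring
  have affine_P : Integrable (fun x ↦ φ 0 + g 0 * x) P :=
    (integrable_const _).add (hP.const_mul _)
  have affine_Q : Integrable (fun x ↦ φ 0 + g 0 * x) Q :=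
    (integrable_const _).add (hQ.const_mul _)
  have remainder_le := integral_intervalIntegral_sub_base_le hP hQ hmass hmean hlpm g 0
  simp_rw [remainder_eq] at remainder_le
  specialize remainder_le (hφP.sub affine_P) (hφQ.sub affine_Q)
  rw [integral_sub hφP affine_P, integral_sub hφQ affine_Q, integral_const_add_mul hP,
    integral_const_add_mul hQ, hmass, hmean] at remainder_le
  exact (sub_le_sub_iff_right _).1 remainder_le

theorem convexOrder_iff (hP : Integrable (fun x ↦ x) P) (hQ : Integrable (fun x ↦ x) Q) :
    ConvexOrder P Q ↔ P.real univ = Q.real univ ∧ ∫ x, x ∂P = ∫ x, x ∂Q ∧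
      ∀ A, lowerPartialMoment P A ≤ lowerPartialMoment Q A := by
  refine ⟨fun h ↦ ⟨?_, ?_, fun A ↦ ?_⟩, fun ⟨hmass, hmean, hlpm⟩ φ hφ hφP hφQ ↦
    integral_le_integral_of_convexOn hP hQ hmass hmean hlpm hφ hφP hφQ⟩
  · have upper := h _ (convexOn_const 1 convex_univ) (integrable_const _) (integrable_const _)
    have lower := h _ (convexOn_const (-1) convex_univ) (integrable_const _) (integrable_const _)
    simp only [integral_const, smul_eq_mul] at upper lower
    linarith
  · have upper := h _ (convexOn_id convex_univ) hP hQ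
    have lower := h _ (concaveOn_id convex_univ).neg hP.neg hQ.neg
    simp only [id_eq, Pi.neg_apply] at upper lower
    rw [integral_neg, integral_neg] at lower
    linarith
  · exact h _ (convexOn_max_sub_zero A) (integrable_max_sub_zero hP A)
      (integrable_max_sub_zero hQ A)

end LowerPartialMoment

section DistributionFunction

variable (μ ν : Measure ℝ)

theorem fconv_sub_sub {f₁ f₂ h₁ h₂ : ℝ → ℝ} {A : ℝ}
    (h₁₁ : Integrable fun t ↦ f₁ t * h₁ (A - t)) (h₁₂ : Integrable fun t ↦ f₁ t * h₂ (A - t))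
    (h₂₁ : Integrable fun t ↦ f₂ t * h₁ (A - t)) (h₂₂ : Integrable fun t ↦ f₂ t * h₂ (A - t)) :
    fconv (fun t ↦ f₁ t - f₂ t) (fun t ↦ h₁ t - h₂ t) A =
      fconv f₁ h₁ A - fconv f₁ h₂ A - (fconv f₂ h₁ A - fconv f₂ h₂ A) := by
  simp only [fconv, sub_mul _ _ (_ - _), mul_sub]
  rw [integral_sub, integral_sub h₁₁ h₁₂, integral_sub h₂₁ h₂₂]
  exacts [h₁₁.sub h₁₂, h₂₁.sub h₂₂]

theorem distFun_nonneg (x : ℝ) : 0 ≤ distFun μ x := ENNReal.toReal_nonneg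

variable [IsFiniteMeasure μ] [IsFiniteMeasure ν]

theorem monotone_distFun : Monotone (distFun μ) := fun _ _ hxy ↦
  measureReal_mono (Iic_subset_Iic.2 hxy)

theorem measurable_distFun_mul_distFun_sub (A : ℝ) :
    Measurable fun t ↦ distFun μ t * distFun ν (A - t) :=
  (monotone_distFun μ).measurable.mul ((monotone_distFun ν).measurable.comp (by fun_prop))

theorem lintegral_ofReal_distFun_mul_distFun_sub (A : ℝ) :
    ∫⁻ t, ENNReal.ofReal (distFun μ t * distFun ν (A - t)) =
      ∫⁻ z, ENNReal.ofReal (A - z) ∂(μ ∗ ν) := by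
  simp_rw [ENNReal.ofReal_mul (distFun_nonneg μ _), distFun,
    ENNReal.ofReal_toReal (measure_ne_top _ _)]
  exact lintegral_measure_Iic_mul_measure_Iic_sub μ ν A

theorem integrable_distFun_mul_distFun_sub (h : Integrable (fun x ↦ x) (μ ∗ ν)) (A : ℝ) :
    Integrable fun t ↦ distFun μ t * distFun ν (A - t) := by
  refine ⟨(measurable_distFun_mul_distFun_sub μ ν A).aestronglyMeasurable, ?_⟩
  rw [hasFiniteIntegral_iff_ofReal (ae_of_all _ fun t ↦
    mul_nonneg (distFun_nonneg μ t) (distFun_nonneg ν _)),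
    lintegral_ofReal_distFun_mul_distFun_sub, lintegral_ofReal_const_sub h]
  exact ENNReal.ofReal_lt_top

theorem fconv_distFun (A : ℝ) :
    fconv (distFun μ) (distFun ν) A = lowerPartialMoment (μ ∗ ν) A := by
  rw [fconv, integral_eq_lintegral_of_nonneg_ae
    (ae_of_all _ fun t ↦ mul_nonneg (distFun_nonneg μ t) (distFun_nonneg ν _))
    (measurable_distFun_mul_distFun_sub μ ν A).aestronglyMeasurable,
    lintegral_ofReal_distFun_mul_distFun_sub, lowerPartialMoment_eq_toReal_lintegral]

end DistributionFunction

section Convolution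

theorem measureReal_univ_conv {M : Type*} [AddMonoid M] [MeasurableSpace M] [MeasurableAdd₂ M]
    (μ ν : Measure M) [SFinite ν] : (μ ∗ ν).real univ = μ.real univ * ν.real univ := by
  rw [Measure.conv, map_measureReal_apply (by fun_prop) .univ, preimage_univ, ← univ_prod_univ,
    measureReal_prod_prod]

variable {E : Type*} [NormedAddCommGroup E] [MeasurableSpace E] [BorelSpace E]
  [SecondCountableTopology E] {μ ν : Measure E} [IsFiniteMeasure μ] [IsFiniteMeasure ν]

theorem integrable_id_conv (hμ : Integrable (fun x ↦ x) μ) (hν : Integrable (fun x ↦ x) ν) :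
    Integrable (fun x ↦ x) (μ ∗ ν) := by
  rw [Measure.conv, integrable_map_measure (by fun_prop) (by fun_prop)]
  exact (hμ.comp_fst ν).add (hν.comp_snd μ)

theorem integral_id_conv [NormedSpace ℝ E] [CompleteSpace E] (hμ : Integrable (fun x ↦ x) μ)
    (hν : Integrable (fun x ↦ x) ν) :
    ∫ x, x ∂(μ ∗ ν) = ν.real univ • ∫ x, x ∂μ + μ.real univ • ∫ x, x ∂ν := by
  rw [integral_conv (integrable_id_conv hμ hν)]
  simp_rw [integral_add (integrable_const _) hν, integral_const]
  rw [integral_add (hμ.fun_smul _) (integrable_const _), integral_smul, integral_const]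

end Convolution

section MeanConvSq

/-- The mixture `½ (μ ∗ μ + ν ∗ ν)` of the convolution squares of two measures, the upper bound in
the convex order of the theorem. -/
noncomputable def meanConvSq (μ ν : Measure ℝ) : Measure ℝ :=
  (2 : ENNReal)⁻¹ • (μ ∗ μ + ν ∗ ν)

instance (μ ν : Measure ℝ) [IsFiniteMeasure μ] [IsFiniteMeasure ν] :
    IsFiniteMeasure (meanConvSq μ ν) :=
  Measure.smul_finite _ (by simp)

variable {μ ν : Measure ℝ}

theorem integrable_meanConvSq {f : ℝ → ℝ} (hμ : Integrable f (μ ∗ μ)) (hν : Integrable f (ν ∗ ν)) :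
    Integrable f (meanConvSq μ ν) :=
  (hμ.add_measure hν).smul_measure (by simp)

theorem integral_meanConvSq {f : ℝ → ℝ} (hμ : Integrable f (μ ∗ μ)) (hν : Integrable f (ν ∗ ν)) :
    ∫ x, f x ∂(meanConvSq μ ν) = (∫ x, f x ∂(μ ∗ μ) + ∫ x, f x ∂(ν ∗ ν)) / 2 := by
  rw [meanConvSq, integral_smul_measure, integral_add_measure hμ hν, ENNReal.toReal_inv,
    ENNReal.toReal_ofNat, smul_eq_mul, inv_mul_eq_div]

variable [IsFiniteMeasure μ] [IsFiniteMeasure ν]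

theorem measureReal_univ_meanConvSq :
    (meanConvSq μ ν).real univ = (μ.real univ ^ 2 + ν.real univ ^ 2) / 2 := by
  have h := integral_meanConvSq (μ := μ) (ν := ν) (f := fun _ ↦ 1) (integrable_const _)
    (integrable_const _)
  simpa only [integral_const, smul_eq_mul, mul_one, measureReal_univ_conv, ← sq] using h

theorem measureReal_univ_conv_eq_meanConvSq_iff :
    (μ ∗ ν).real univ = (meanConvSq μ ν).real univ ↔ μ univ = ν univ := by
  rw [measureReal_univ_conv, measureReal_univ_meanConvSq, ← measureReal_eq_measureReal_iff]
  constructor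
  · intro h
    have : (μ.real univ - ν.real univ) ^ 2 = 0 := by linarith
    exact sub_eq_zero.1 (pow_eq_zero_iff two_ne_zero |>.1 this)
  · intro h
    rw [h]
    ring

theorem integral_id_conv_eq_meanConvSq (hμ : Integrable (fun x ↦ x) μ)
    (hν : Integrable (fun x ↦ x) ν) (hmass : μ univ = ν univ) :
    ∫ x, x ∂(μ ∗ ν) = ∫ x, x ∂(meanConvSq μ ν) := by
  rw [integral_meanConvSq (integrable_id_conv hμ hμ) (integrable_id_conv hν hν),
    integral_id_conv hμ hν, integral_id_conv hμ hμ, integral_id_conv hν hν,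
    (measureReal_eq_measureReal_iff).2 hmass]
  simp only [smul_eq_mul]
  ring

theorem fconv_distFun_sub_self (hμ : Integrable (fun x ↦ x) μ) (hν : Integrable (fun x ↦ x) ν)
    (A : ℝ) :
    fconv (fun t ↦ distFun μ t - distFun ν t) (fun t ↦ distFun μ t - distFun ν t) A =
      2 * (lowerPartialMoment (meanConvSq μ ν) A - lowerPartialMoment (μ ∗ ν) A) := by
  have hμμ := integrable_id_conv hμ hμ
  have hνν := integrable_id_conv hν hν
  rw [fconv_sub_sub (integrable_distFun_mul_distFun_sub μ μ hμμ A)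
    (integrable_distFun_mul_distFun_sub μ ν (integrable_id_conv hμ hν) A)
    (integrable_distFun_mul_distFun_sub ν μ (integrable_id_conv hν hμ) A)
    (integrable_distFun_mul_distFun_sub ν ν hνν A)]
  simp only [fconv_distFun, Measure.conv_comm ν μ]
  rw [lowerPartialMoment.eq_1 (meanConvSq μ ν), integral_meanConvSq (integrable_max_sub_zero hμμ A)
    (integrable_max_sub_zero hνν A), ← lowerPartialMoment, ← lowerPartialMoment]
  ring

end MeanConvSq

/-- Theorem 2.3: For finite Borel measures μ, ν on ℝ with finite
first moments, with distribution functions F, G, the following are equivalent: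
(1) μ(ℝ) = ν(ℝ) and (F−G)∗(F−G) ≥ 0; (2) μ∗ν ≼ₓ ½(μ∗μ + ν∗ν). -/
theorem stmt0 (μ ν : Measure ℝ) [IsFiniteMeasure μ] [IsFiniteMeasure ν]
    (hμ : Integrable (fun x : ℝ => |x|) μ) (hν : Integrable (fun x : ℝ => |x|) ν) :
    (μ Set.univ = ν Set.univ ∧
        ∀ A : ℝ, 0 ≤ fconv (fun t => distFun μ t - distFun ν t)
          (fun t => distFun μ t - distFun ν t) A) ↔
      ConvexOrder (Measure.conv μ ν)
        ((2 : ENNReal)⁻¹ • (Measure.conv μ μ + Measure.conv ν ν)) := by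
  have hμ_id : Integrable (fun x ↦ x) μ := (integrable_norm_iff (by fun_prop)).1 hμ
  have hν_id : Integrable (fun x ↦ x) ν := (integrable_norm_iff (by fun_prop)).1 hν
  have fconv_nonneg_iff (A : ℝ) :
      0 ≤ fconv (fun t ↦ distFun μ t - distFun ν t) (fun t ↦ distFun μ t - distFun ν t) A ↔
        lowerPartialMoment (μ ∗ ν) A ≤ lowerPartialMoment (meanConvSq μ ν) A := by
    rw [fconv_distFun_sub_self hμ_id hν_id, mul_nonneg_iff_of_pos_left two_pos, sub_nonneg]
  change _ ↔ ConvexOrder (μ ∗ ν) (meanConvSq μ ν)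
  rw [convexOrder_iff (integrable_id_conv hμ_id hν_id) (integrable_meanConvSq
    (integrable_id_conv hμ_id hμ_id) (integrable_id_conv hν_id hν_id)),
    measureReal_univ_conv_eq_meanConvSq_iff]
  simp_rw [fconv_nonneg_iff]
  refine and_congr_right fun hmass ↦ ?_
  rw [and_iff_right (integral_id_conv_eq_meanConvSq hμ_id hν_id hmass)]
end

section
/- Let μ and ν be two finite Borel measures on ℝ with finite first moments such that μ(ℝ) = ν(ℝ), and let F, G be their distribution functions. Then for every A ∈ ℝ: ∫(x−A)_+ d(μ*μ) + ∫(x−A)_+ d(ν*ν) − 2∫(x−A)_+ d(μ*ν) = ((F−G)*(F−G))(A), where (x−A)_+ = max(x−A, 0). -/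
open MeasureTheory Set

/-! The length of `{t | t < x ∧ A - t < y}` is `(x + y - A)₊`, so Tonelli's theorem turns
`∫ (z - A)₊ d(μ ∗ ν)` into `∫ μ(t, ∞) ν(A - t, ∞) dt`, which is bilinear in `μ` and `ν`. For
measures of equal mass, `F - G` is the difference of the tails with its sign reversed, and the two
reversed signs cancel in the convolution. -/

section UpperTails

variable {μ ν : Measure ℝ}

lemma lintegral_ofReal_sub_conv [SFinite μ] [SFinite ν] (A : ℝ) :
    ∫⁻ z, ENNReal.ofReal (z - A) ∂(μ ∗ ν) = ∫⁻ t, μ (Ioi t) * ν (Ioi (A - t)) := by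
  let S : Set ((ℝ × ℝ) × ℝ) := {q | A - q.1.2 < q.2} ∩ {q | q.2 < q.1.1}
  have hS : MeasurableSet S :=
    (measurableSet_lt (by fun_prop) (by fun_prop)).inter
      (measurableSet_lt (by fun_prop) (by fun_prop))
  have slice_fst (p : ℝ × ℝ) : volume (Prod.mk p ⁻¹' S) = ENNReal.ofReal (p.1 + p.2 - A) := by
    change volume (Ioo (A - p.2) p.1) = _
    rw [Real.volume_Ioo]
    congr 1
    ring
  have slice_snd (t : ℝ) : (fun p ↦ (p, t)) ⁻¹' S = Ioi t ×ˢ Ioi (A - t) := by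
    ext p
    simp only [S, mem_preimage, mem_inter_iff, mem_ofPred_eq, mem_prod, mem_Ioi, sub_lt_comm,
      and_comm]
  calc ∫⁻ z, ENNReal.ofReal (z - A) ∂(μ ∗ ν)
      = ∫⁻ p, ENNReal.ofReal (p.1 + p.2 - A) ∂(μ.prod ν) :=
        Measure.lintegral_conv_eq_lintegral_sum (by fun_prop)
    _ = ((μ.prod ν).prod volume) S := by simp only [Measure.prod_apply hS, slice_fst]
    _ = ∫⁻ t, μ (Ioi t) * ν (Ioi (A - t)) := by
        simp only [Measure.prod_apply_symm hS, slice_snd, Measure.prod_prod]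

lemma integrable_max_sub_zero_conv [IsFiniteMeasure μ] [IsFiniteMeasure ν]
    (hμ : Integrable (fun x ↦ max x 0) μ) (hν : Integrable (fun x ↦ max x 0) ν) (A : ℝ) :
    Integrable (fun z ↦ max (z - A) 0) (μ ∗ ν) := by
  have bound (p : ℝ × ℝ) : ‖max (p.1 + p.2 - A) 0‖ ≤ max p.1 0 + max p.2 0 + |A| := by
    rw [Real.norm_of_nonneg (le_max_right _ _)]
    refine max_le ?_ (by positivity)
    linarith [le_max_left p.1 0, le_max_left p.2 0, neg_abs_le A]
  refine (integrable_map_measure (by fun_prop) (by fun_prop)).2 ?_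
  exact (((hμ.comp_fst ν).add (hν.comp_snd μ)).add (integrable_const |A|)).mono'
    (by fun_prop) (ae_of_all _ bound)

lemma measurable_measure_Ioi_mul_measure_Ioi_sub (A : ℝ) :
    Measurable fun t ↦ μ (Ioi t) * ν (Ioi (A - t)) := by
  have measurable_tail (ρ : Measure ℝ) : Measurable fun t ↦ ρ (Ioi t) :=
    Antitone.measurable fun _ _ h ↦ measure_mono (Ioi_subset_Ioi h)
  exact (measurable_tail μ).mul ((measurable_tail ν).comp (measurable_const.sub measurable_id))

lemma integrable_measureReal_Ioi_mul_measureReal_Ioi_sub [IsFiniteMeasure μ] [IsFiniteMeasure ν]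
    (hμ : Integrable (fun x ↦ max x 0) μ) (hν : Integrable (fun x ↦ max x 0) ν) (A : ℝ) :
    Integrable fun t ↦ μ.real (Ioi t) * ν.real (Ioi (A - t)) := by
  have hfin : ∫⁻ t, μ (Ioi t) * ν (Ioi (A - t)) ≠ ⊤ := by
    rw [← lintegral_ofReal_sub_conv]
    simpa using (integrable_max_sub_zero_conv hμ hν A).lintegral_lt_top.ne
  simpa only [ENNReal.toReal_mul] using! integrable_toReal_of_lintegral_ne_top
    (measurable_measure_Ioi_mul_measure_Ioi_sub A).aemeasurable hfin

lemma integral_max_sub_zero_conv [IsFiniteMeasure μ] [IsFiniteMeasure ν] (A : ℝ) :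
    ∫ z, max (z - A) 0 ∂(μ ∗ ν) = ∫ t, μ.real (Ioi t) * ν.real (Ioi (A - t)) := by
  calc ∫ z, max (z - A) 0 ∂(μ ∗ ν)
      = (∫⁻ z, ENNReal.ofReal (z - A) ∂(μ ∗ ν)).toReal := by
        simp only [← ENNReal.toReal_ofReal']
        exact integral_toReal (by fun_prop) (ae_of_all _ fun _ ↦ ENNReal.ofReal_lt_top)
    _ = (∫⁻ t, μ (Ioi t) * ν (Ioi (A - t))).toReal := by rw [lintegral_ofReal_sub_conv]
    _ = ∫ t, (μ (Ioi t) * ν (Ioi (A - t))).toReal :=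
        (integral_toReal (measurable_measure_Ioi_mul_measure_Ioi_sub A).aemeasurable
          (ae_of_all _ fun _ ↦ ENNReal.mul_lt_top (measure_lt_top _ _) (measure_lt_top _ _))).symm
    _ = ∫ t, μ.real (Ioi t) * ν.real (Ioi (A - t)) := by
        simp only [ENNReal.toReal_mul, measureReal_def]

end UpperTails

lemma distFun_eq_measureReal_univ_sub (μ : Measure ℝ) [IsFiniteMeasure μ] (t : ℝ) :
    distFun μ t = μ.real univ - μ.real (Ioi t) := by
  rw [← measureReal_compl measurableSet_Ioi, compl_Ioi]
  rfl

lemma distFun_sub_distFun {μ ν : Measure ℝ} [IsFiniteMeasure μ] [IsFiniteMeasure ν]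
    (hmass : μ univ = ν univ) (t : ℝ) :
    distFun μ t - distFun ν t = ν.real (Ioi t) - μ.real (Ioi t) := by
  have hreal : μ.real univ = ν.real univ := congrArg ENNReal.toReal hmass
  rw [distFun_eq_measureReal_univ_sub, distFun_eq_measureReal_univ_sub, hreal,
    sub_sub_sub_cancel_left]

lemma integrable_max_zero_of_abs {μ : Measure ℝ} (hμ : Integrable (fun x ↦ |x|) μ) :
    Integrable (fun x ↦ max x 0) μ :=
  ((integrable_norm_iff (by fun_prop)).1 hμ).pos_part

theorem stmt2_general (μ₁ ν₁ μ₂ ν₂ : Measure ℝ) [IsFiniteMeasure μ₁] [IsFiniteMeasure ν₁]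
    [IsFiniteMeasure μ₂] [IsFiniteMeasure ν₂]
    (hμ₁ : Integrable (fun x ↦ max x 0) μ₁) (hν₁ : Integrable (fun x ↦ max x 0) ν₁)
    (hμ₂ : Integrable (fun x ↦ max x 0) μ₂) (hν₂ : Integrable (fun x ↦ max x 0) ν₂)
    (hmass₁ : μ₁ univ = ν₁ univ) (hmass₂ : μ₂ univ = ν₂ univ) (A : ℝ) :
    (∫ x, max (x - A) 0 ∂(μ₁ ∗ μ₂)) + (∫ x, max (x - A) 0 ∂(ν₁ ∗ ν₂)) -
        ((∫ x, max (x - A) 0 ∂(μ₁ ∗ ν₂)) + ∫ x, max (x - A) 0 ∂(ν₁ ∗ μ₂)) =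
      fconv (fun t ↦ distFun μ₁ t - distFun ν₁ t) (fun t ↦ distFun μ₂ t - distFun ν₂ t) A := by
  have hμμ := integrable_measureReal_Ioi_mul_measureReal_Ioi_sub hμ₁ hμ₂ A
  have hνν := integrable_measureReal_Ioi_mul_measureReal_Ioi_sub hν₁ hν₂ A
  have hμν := integrable_measureReal_Ioi_mul_measureReal_Ioi_sub hμ₁ hν₂ A
  have hνμ := integrable_measureReal_Ioi_mul_measureReal_Ioi_sub hν₁ hμ₂ A
  simp only [integral_max_sub_zero_conv, fconv, distFun_sub_distFun hmass₁,
    distFun_sub_distFun hmass₂]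
  rw [← integral_add' hμμ hνν, ← integral_add' hμν hνμ,
    ← integral_sub' (hμμ.add hνν) (hμν.add hνμ)]
  congr with t
  simp only [Pi.add_apply, Pi.sub_apply]
  ring

/-- key identity: For finite Borel measures μ, ν on ℝ with finite
first moments and μ(ℝ) = ν(ℝ), for every A ∈ ℝ,
∫(x−A)₊ d(μ∗μ) + ∫(x−A)₊ d(ν∗ν) − 2∫(x−A)₊ d(μ∗ν) = ((F−G)∗(F−G))(A). -/
theorem stmt2 (μ ν : Measure ℝ) [IsFiniteMeasure μ] [IsFiniteMeasure ν]
    (hμ : Integrable (fun x : ℝ => |x|) μ) (hν : Integrable (fun x : ℝ => |x|) ν)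
    (hmass : μ Set.univ = ν Set.univ) :
    ∀ A : ℝ,
      (∫ x, max (x - A) 0 ∂(Measure.conv μ μ)) + (∫ x, max (x - A) 0 ∂(Measure.conv ν ν)) -
          2 * ∫ x, max (x - A) 0 ∂(Measure.conv μ ν) =
        fconv (fun t => distFun μ t - distFun ν t) (fun t => distFun μ t - distFun ν t) A := by
  intro A
  have hμ' := integrable_max_zero_of_abs hμ
  have hν' := integrable_max_zero_of_abs hν
  rw [two_mul, ← stmt2_general μ ν μ ν hμ' hν' hμ' hν' hmass hmass, Measure.conv_comm ν μ]
end

section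
/- Let μ and ν be discrete probability distributions concentrated on the non-negative integers, with a_k = μ({k}) and b_k = ν({k}) for k = 0,1,2,…, both having finite first moments. Let F, G be the distribution functions of μ and ν. Then the following are equivalent: (1) for all convex functions φ: ℝ → ℝ, Σ_{i=0}^∞ Σ_{j=0}^∞ (a_i a_j + b_i b_j) φ(i+j) ≥ Σ_{i=0}^∞ Σ_{j=0}^∞ 2 a_i b_j φ(i+j); (2) ((F−G)*(F−G))(x) ≥ 0 for every x ∈ ℝ; (3) for every i ∈ ℕ, the discrete convolution Σ_{j=0}^{i} (G−F)(j)·(G−F)(i−j) ≥ 0. -/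
open MeasureTheory Set

/-!
Put `c = a - b` and let `D` be the sequence of partial sums of `c`, that is, `F - G` on `ℕ`.
Condition (1) says that `∑ cᵢ cⱼ φ(i + j) = ∑ₙ (c ⋆ c)ₙ φ(n)` is non-negative for convex `φ`.
Multiplying generating functions by `(1 - X)⁻²` shows that `D ⋆ D` is the twofold partial sum of
`c ⋆ c`, so two summations by parts turn this sum into `∑ₙ (D ⋆ D)ₙ Δ²φ(n)`, while
`φ(x) = max (m + 1 - x) 0` recovers the single term `(D ⋆ D)ₘ`. Finally `F - G` is a step function
with values `D`, so `(F - G) * (F - G)` is the piecewise linear interpolation of `D ⋆ D`, shifted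
by one.

The boundary terms at infinity are handled as follows. If `φ` is antitone on `ℕ`, one summation by
parts and Abel's inequality suffice. Otherwise `φ` grows at least linearly, so convergence of the
series for `φ` forces that of `∑ cᵢ cⱼ (i + j)`; its sum is `0` because `∑ cᵢ = 0`, and this makes
the second summation by parts possible.
-/

open Filter Topology

/-- The partial sums of a sequence, including the `n`-th term; on `ℕ` this is the distribution
function of the measure with point masses `u`. -/
def partialSum {M : Type*} [AddCommMonoid M] (u : ℕ → M) (n : ℕ) : M :=
  ∑ k ∈ Finset.range (n + 1), u k

/-- The discrete convolution (Cauchy product) of two sequences, as in condition (3) of `stmt6`. -/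
def seqConv {R : Type*} [Semiring R] (u v : ℕ → R) (n : ℕ) : R :=
  ∑ p ∈ Finset.HasAntidiagonal.antidiagonal n, u p.1 * v p.2

lemma partialSum_succ {M : Type*} [AddCommMonoid M] (u : ℕ → M) (n : ℕ) :
    partialSum u (n + 1) = partialSum u n + u (n + 1) :=
  Finset.sum_range_succ u (n + 1)

lemma partialSum_sub {M : Type*} [AddCommGroup M] (u v : ℕ → M) :
    partialSum (u - v) = partialSum u - partialSum v :=
  funext fun _ => Finset.sum_sub_distrib u v

lemma seqConv_eq_sum_range {R : Type*} [Semiring R] (u v : ℕ → R) (n : ℕ) :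
    seqConv u v n = ∑ k ∈ Finset.range (n + 1), u k * v (n - k) :=
  Finset.Nat.sum_antidiagonal_eq_sum_range_succ (fun i j => u i * v j) n

lemma powerSeries_mk_mul_mk {R : Type*} [Semiring R] (u v : ℕ → R) :
    PowerSeries.mk u * PowerSeries.mk v = PowerSeries.mk (seqConv u v) := by
  ext n
  simp only [PowerSeries.coeff_mul, PowerSeries.coeff_mk, seqConv]

lemma powerSeries_mk_partialSum {R : Type*} [Semiring R] (u : ℕ → R) :
    PowerSeries.mk (partialSum u) = PowerSeries.mk u * PowerSeries.mk 1 := by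
  rw [powerSeries_mk_mul_mk]
  congr 1
  ext n
  simp [seqConv_eq_sum_range, partialSum]

theorem seqConv_partialSum_partialSum {R : Type*} [CommSemiring R] (u v : ℕ → R) :
    seqConv (partialSum u) (partialSum v) = partialSum (partialSum (seqConv u v)) := by
  have h : PowerSeries.mk (seqConv (partialSum u) (partialSum v)) =
      PowerSeries.mk (partialSum (partialSum (seqConv u v))) := by
    simp only [← powerSeries_mk_mul_mk, powerSeries_mk_partialSum]
    ring
  ext n
  simpa only [PowerSeries.coeff_mk] using congrArg (PowerSeries.coeff n) h

lemma partialSum_partialSum_eq_sum {R : Type*} [Semiring R] (u : ℕ → R) (m : ℕ) :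
    partialSum (partialSum u) m =
      ∑ n ∈ Finset.range (m + 1), u n * ((m + 1 - n : ℕ) : R) := by
  induction m with
  | zero => simp [partialSum]
  | succ m ih =>
    rw [partialSum_succ, ih, partialSum_succ, partialSum, ← add_assoc, ← Finset.sum_add_distrib,
      Finset.sum_range_succ _ (m + 1)]
    congr 1
    · refine Finset.sum_congr rfl fun n hn => ?_
      rw [Nat.succ_sub (Finset.mem_range.1 hn).le, Nat.cast_succ, mul_add, mul_one]
    · simp

theorem sum_mul_nonneg_of_antitone {R : Type*} [Semiring R] [PartialOrder R] [IsOrderedRing R]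
    {δ u : ℕ → R} (hδ : Antitone δ) (hδ0 : ∀ k, 0 ≤ δ k)
    (hu : ∀ n, 0 ≤ partialSum u n) (n : ℕ) : 0 ≤ ∑ k ∈ Finset.range n, δ k * u k := by
  have hlast : ∀ n, δ n * partialSum u n ≤ ∑ k ∈ Finset.range (n + 1), δ k * u k := by
    intro n
    induction n with
    | zero => simp [partialSum]
    | succ n ih =>
      rw [Finset.sum_range_succ, partialSum_succ, mul_add]
      gcongr
      exact (mul_le_mul_of_nonneg_right (hδ n.le_succ) (hu n)).trans ih
  cases n with
  | zero => simp
  | succ n => exact (mul_nonneg (hδ0 n) (hu n)).trans (hlast n)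

lemma hasSum_ite_lt_sum_range {M : Type*} [AddCommMonoid M] [TopologicalSpace M] (u : ℕ → M)
    (m : ℕ) :
    HasSum (fun n => if n < m then u n else 0) (∑ n ∈ Finset.range m, u n) := by
  have h : HasSum (fun n => if n ∈ Finset.range m then u n else 0)
      (∑ n ∈ Finset.range m, if n ∈ Finset.range m then u n else 0) :=
    hasSum_sum_of_ne_finset_zero fun n hn => if_neg hn
  rw [Finset.sum_ite_mem, Finset.inter_self] at h
  simpa only [Finset.mem_range] using h

lemma hasSum_ite_lt_neg_partialSum {M : Type*} [AddCommGroup M] [TopologicalSpace M]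
    [IsTopologicalAddGroup M] {u : ℕ → M} (hu : HasSum u 0) (k : ℕ) :
    HasSum (fun n => if k < n then u n else 0) (-partialSum u k) := by
  rw [← zero_sub]
  refine (hu.sub (hasSum_ite_lt_sum_range u (k + 1))).congr_fun fun n => ?_
  rcases lt_or_ge k n with hn | hn
  · simp [hn, not_le.2 hn]
  · simp [hn, not_lt.2 hn]

theorem hasSum_sub_mul_partialSum_of_monotone {u f : ℕ → ℝ} {s : ℝ} (hf : Monotone f)
    (hu : HasSum u 0) (huf : HasSum (fun n => u n * f n) s) :
    HasSum (fun k => (f k - f (k + 1)) * partialSum u k) s := by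
  let F : ℕ × ℕ → ℝ := fun p => u p.1 * if p.2 < p.1 then f (p.2 + 1) - f p.2 else 0
  have hinc : ∀ n, HasSum (fun k => if k < n then f (k + 1) - f k else 0) (f n - f 0) :=
      fun n => by
    simpa only [Finset.sum_range_sub] using hasSum_ite_lt_sum_range (fun k => f (k + 1) - f k) n
  have hrow : HasSum (fun n => u n * (f n - f 0)) s := by
    simpa only [mul_sub, zero_mul, sub_zero] using huf.sub (hu.mul_right (f 0))
  have hF : Summable F := by
    have hnorm : ∀ n, HasSum (fun k => ‖F (n, k)‖) ‖u n * (f n - f 0)‖ := fun n => by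
      have hterm : ∀ k, (0 : ℝ) ≤ if k < n then f (k + 1) - f k else 0 := fun k => by
        split_ifs
        exacts [sub_nonneg.2 (hf k.le_succ), le_rfl]
      simp only [F, norm_mul, Real.norm_of_nonneg (hterm _),
        Real.norm_of_nonneg (sub_nonneg.2 (hf n.zero_le))]
      exact (hinc n).mul_left _
    refine .of_norm ((summable_prod_of_nonneg fun _ => norm_nonneg _).2
      ⟨fun n => (hnorm n).summable, ?_⟩)
    simpa only [(hnorm _).tsum_eq] using hrow.summable.norm
  have hFs : HasSum F s := by
    rw [hrow.unique (hF.hasSum.prod_fiberwise fun n => (hinc n).mul_left (u n))]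
    exact hF.hasSum
  refine ((Equiv.prodComm ℕ ℕ).hasSum_iff.2 hFs).prod_fiberwise fun k => ?_
  rw [← neg_sub, neg_mul_comm]
  refine ((hasSum_ite_lt_neg_partialSum hu k).mul_left _).congr_fun fun n => ?_
  by_cases hk : k < n <;> simp [F, hk, mul_comm]

lemma hasSum_sub_mul_partialSum_of_antitone {u f : ℕ → ℝ} {s : ℝ} (hf : Antitone f)
    (hu : HasSum u 0) (huf : HasSum (fun n => u n * f n) s) :
    HasSum (fun k => (f k - f (k + 1)) * partialSum u k) s := by
  have h := hasSum_sub_mul_partialSum_of_monotone hf.neg hu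
    (by simpa only [Pi.neg_apply, mul_neg] using huf.neg)
  simpa only [Pi.neg_apply, neg_neg, ← neg_sub', neg_mul] using h.neg

theorem tsum_mul_nonneg_of_antitone {u f : ℕ → ℝ} (hf : Antitone f)
    (hconv : Monotone fun n => f (n + 1) - f n) (hu : HasSum u 0)
    (hpos : ∀ n, 0 ≤ partialSum (partialSum u) n) (huf : Summable fun n => u n * f n) :
    0 ≤ ∑' n, u n * f n := by
  have h := hasSum_sub_mul_partialSum_of_antitone hf hu huf.hasSum
  refine ge_of_tendsto' h.tendsto_sum_nat
    (sum_mul_nonneg_of_antitone (fun m n hmn => ?_) (fun k => sub_nonneg.2 (hf k.le_succ)) hpos)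
  have := hconv hmn
  dsimp only at this
  linarith

theorem tsum_mul_nonneg_of_hasSum_mul_natCast {u f : ℕ → ℝ}
    (hconv : Monotone fun n => f (n + 1) - f n) (hu : HasSum u 0)
    (hu₁ : HasSum (fun n => u n * n) 0)
    (hpos : ∀ n, 0 ≤ partialSum (partialSum u) n) (huf : Summable fun n => u n * f n) :
    0 ≤ ∑' n, u n * f n := by
  set d : ℕ → ℝ := fun n => f (n + 1) - f n with hd
  have hS : HasSum (partialSum u) 0 := by
    have h := hasSum_sub_mul_partialSum_of_monotone Nat.mono_cast hu hu₁
    simpa using h.neg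
  have hmono : Monotone fun n => f n - d 0 * n := by
    refine monotone_nat_of_le_succ fun n => ?_
    have := hconv n.zero_le
    simp only [hd] at this ⊢
    push_cast
    linarith
  have huf' : HasSum (fun n => u n * (f n - d 0 * n)) (∑' n, u n * f n) := by
    have h := huf.hasSum.sub (hu₁.mul_left (d 0))
    rw [mul_zero, sub_zero] at h
    exact h.congr_fun fun n => by ring
  have hSd : HasSum (fun n => partialSum u n * d n) (-∑' n, u n * f n) := by
    have h := (hS.mul_left (d 0)).sub (hasSum_sub_mul_partialSum_of_monotone hmono hu huf')
    rw [mul_zero, zero_sub] at h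
    refine h.congr_fun fun n => ?_
    simp only [hd]
    push_cast
    ring
  have hfin := hasSum_sub_mul_partialSum_of_monotone hconv hS hSd
  refine neg_nonpos.1 (hfin.nonpos fun n => ?_)
  exact mul_nonpos_of_nonpos_of_nonneg (sub_nonpos.2 (hconv n.le_succ)) (hpos n)

lemma exists_natCast_le_mul_one_add_abs {f : ℕ → ℝ} (hconv : Monotone fun n => f (n + 1) - f n)
    (hf : ¬ Antitone f) : ∃ C : ℝ, ∀ n : ℕ, (n : ℝ) ≤ C * (1 + |f n|) := by
  obtain ⟨N, hN⟩ : ∃ N, f N < f (N + 1) := by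
    by_contra! h
    exact hf (antitone_nat_of_succ_le h)
  set d := f (N + 1) - f N
  have hd0 : 0 < d := sub_pos.2 hN
  have hline : ∀ n, N ≤ n → d * ((n : ℝ) - N) ≤ f n - f N := by
    intro n hn
    induction n, hn using Nat.le_induction with
    | base => simp
    | succ n hn ih =>
      have := hconv hn
      push_cast
      dsimp only at this
      linarith
  refine ⟨N + (1 + |f N|) / d, fun n => ?_⟩
  have hle : (n : ℝ) - N ≤ (|f n| + |f N|) / d := by
    rw [le_div_iff₀' hd0]
    rcases le_total N n with hn | hn
    · linarith [hline n hn, le_abs_self (f n), neg_abs_le (f N)]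
    · have : (n : ℝ) ≤ N := Nat.cast_le.2 hn
      nlinarith [abs_nonneg (f n), abs_nonneg (f N)]
  calc (n : ℝ) ≤ N + (|f n| + |f N|) / d := by linarith
    _ ≤ N * (1 + |f n|) + (1 + |f N|) * (1 + |f n|) / d := by
      gcongr
      · exact le_mul_of_one_le_right N.cast_nonneg (by simp)
      · nlinarith [abs_nonneg (f n), abs_nonneg (f N)]
    _ = (N + (1 + |f N|) / d) * (1 + |f n|) := by ring

section DoubleSeries

variable {u v f : ℕ → ℝ}

lemma hasSum_seqConv_mul {s : ℝ}
    (h : HasSum (fun p : ℕ × ℕ => u p.1 * v p.2 * f (p.1 + p.2)) s) :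
    HasSum (fun n => seqConv u v n * f n) s := by
  refine (Finset.HasAntidiagonal.sigmaAntidiagonalEquivProd.hasSum_iff.2 h).sigma fun n => ?_
  rw [seqConv, Finset.sum_mul, ← Finset.sum_coe_sort]
  refine (hasSum_fintype _).congr_fun fun p => ?_
  have hp : p.1.1 + p.1.2 = n := Finset.HasAntidiagonal.mem_antidiagonal.1 p.2
  simp only [Function.comp_apply, Finset.HasAntidiagonal.sigmaAntidiagonalEquivProd_apply, hp]

lemma hasSum_prod_mul_zero (hv : HasSum v 0) (h : Summable fun p : ℕ × ℕ => u p.1 * v p.2) :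
    HasSum (fun p : ℕ × ℕ => u p.1 * v p.2) 0 := by
  have hrow : HasSum (fun i => u i * 0) (∑' p : ℕ × ℕ, u p.1 * v p.2) :=
    h.hasSum.prod_fiberwise fun i => hv.mul_left (u i)
  simp only [mul_zero] at hrow
  rw [hasSum_zero.unique hrow]
  exact h.hasSum

lemma hasSum_prod_mul_mul_add_zero (hu : HasSum u 0) (hv : HasSum v 0)
    (h : Summable fun p : ℕ × ℕ => u p.1 * v p.2 * ((p.1 + p.2 : ℕ) : ℝ)) :
    HasSum (fun p : ℕ × ℕ => u p.1 * v p.2 * ((p.1 + p.2 : ℕ) : ℝ)) 0 := by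
  have hleft : Summable fun p : ℕ × ℕ => u p.1 * p.1 * v p.2 := by
    refine h.norm.of_norm_bounded fun p => ?_
    rw [mul_right_comm, norm_mul, norm_mul (_ * _), Real.norm_natCast, Real.norm_natCast]
    gcongr
    exact Nat.le_add_right _ _
  have hright : Summable fun p : ℕ × ℕ => v p.1 * p.1 * u p.2 := by
    refine (Equiv.prodComm ℕ ℕ).summable_iff.1 (h.norm.of_norm_bounded fun p => ?_)
    simp only [Function.comp_apply, Equiv.prodComm_apply, Prod.fst_swap, Prod.snd_swap]
    rw [mul_right_comm, mul_comm (v _), norm_mul, norm_mul (_ * _), Real.norm_natCast,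
      Real.norm_natCast]
    gcongr
    exact Nat.le_add_left _ _
  have h₂ := (Equiv.prodComm ℕ ℕ).hasSum_iff.2
    (hasSum_prod_mul_zero (u := fun i => v i * i) hu hright)
  have h₁ := hasSum_prod_mul_zero (u := fun i => u i * i) hv hleft
  rw [← add_zero (0 : ℝ)]
  refine (h₁.add h₂).congr_fun fun p => ?_
  push_cast
  simp only [Function.comp_apply, Equiv.prodComm_apply, Prod.fst_swap, Prod.snd_swap]
  ring

theorem tsum_mul_mul_add_nonneg (hu : HasSum u 0) (hv : HasSum v 0)
    (hpos : ∀ n, 0 ≤ seqConv (partialSum u) (partialSum v) n)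
    (hconv : Monotone fun n => f (n + 1) - f n)
    (h : Summable fun p : ℕ × ℕ => u p.1 * v p.2 * f (p.1 + p.2)) :
    0 ≤ ∑' p : ℕ × ℕ, u p.1 * v p.2 * f (p.1 + p.2) := by
  have huv : Summable fun p : ℕ × ℕ => u p.1 * v p.2 :=
    summable_mul_of_summable_norm hu.summable.norm hv.summable.norm
  have hconv₀ : HasSum (seqConv u v) 0 := by
    simpa only [mul_one] using hasSum_seqConv_mul (f := fun _ => 1)
      (by simpa only [mul_one] using hasSum_prod_mul_zero hv huv)
  have hsum := hasSum_seqConv_mul h.hasSum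
  rw [seqConv_partialSum_partialSum] at hpos
  rw [← hsum.tsum_eq]
  by_cases hf : Antitone f
  · exact tsum_mul_nonneg_of_antitone hf hconv hconv₀ hpos hsum.summable
  · obtain ⟨C, hC⟩ := exists_natCast_le_mul_one_add_abs hconv hf
    refine tsum_mul_nonneg_of_hasSum_mul_natCast hconv hconv₀
      (hasSum_seqConv_mul (hasSum_prod_mul_mul_add_zero hu hv ?_)) hpos hsum.summable
    refine ((huv.norm.add h.norm).mul_left C).of_norm_bounded fun p => ?_
    rw [norm_mul, Real.norm_natCast, norm_mul (_ * _) (f _), Real.norm_eq_abs (f _)]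
    calc _ ≤ ‖u p.1 * v p.2‖ * (C * (1 + |f (p.1 + p.2)|)) := by gcongr; exact hC _
      _ = _ := by ring

end DoubleSeries

lemma monotone_sub_natCast_of_convexOn {φ : ℝ → ℝ} (hφ : ConvexOn ℝ Set.univ φ) :
    Monotone fun n : ℕ => φ ((n + 1 : ℕ) : ℝ) - φ n := by
  refine monotone_nat_of_le_succ fun n => ?_
  have hmid := hφ.2 (Set.mem_univ (n : ℝ)) (Set.mem_univ ((n + 2 : ℕ) : ℝ))
    (by norm_num : (0 : ℝ) ≤ 1 / 2) (by norm_num : (0 : ℝ) ≤ 1 / 2) (by norm_num)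
  have hpt : (1 / 2 : ℝ) • (n : ℝ) + (1 / 2 : ℝ) • ((n + 2 : ℕ) : ℝ) = ((n + 1 : ℕ) : ℝ) := by
    push_cast [smul_eq_mul]
    ring
  rw [hpt, smul_eq_mul, smul_eq_mul] at hmid
  linarith

lemma max_natCast_sub_eq (m n : ℕ) : max ((m : ℝ) - n) 0 = ((m - n : ℕ) : ℝ) := by
  rcases le_total n m with h | h
  · rw [Nat.cast_sub h, max_eq_left (sub_nonneg.2 (Nat.cast_le.2 h))]
  · rw [Nat.sub_eq_zero_of_le h, max_eq_right (sub_nonpos.2 (Nat.cast_le.2 h)), Nat.cast_zero]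

lemma convexOn_max_sub (x : ℝ) : ConvexOn ℝ Set.univ fun y : ℝ => max (x - y) 0 :=
  ((convexOn_const x convex_univ).sub (concaveOn_id convex_univ)).sup
    (convexOn_const 0 convex_univ)

lemma summable_mul_natCast_sub_add (w : ℕ × ℕ → ℝ) (m : ℕ) :
    Summable fun p : ℕ × ℕ => w p * ((m - (p.1 + p.2) : ℕ) : ℝ) := by
  refine summable_of_ne_finset_zero (s := Finset.range m ×ˢ Finset.range m) fun p hp => ?_
  rw [Finset.mem_product, Finset.mem_range, Finset.mem_range] at hp
  rw [Nat.sub_eq_zero_of_le (by omega), Nat.cast_zero, mul_zero]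

lemma tsum_mul_natCast_sub_add (u v : ℕ → ℝ) (m : ℕ) :
    ∑' p : ℕ × ℕ, u p.1 * v p.2 * ((m + 1 - (p.1 + p.2) : ℕ) : ℝ) =
      seqConv (partialSum u) (partialSum v) m := by
  have h := hasSum_seqConv_mul (u := u) (v := v) (f := fun n => ((m + 1 - n : ℕ) : ℝ))
    (summable_mul_natCast_sub_add (fun p => u p.1 * v p.2) (m + 1)).hasSum
  rw [← h.tsum_eq, seqConv_partialSum_partialSum, partialSum_partialSum_eq_sum]
  refine tsum_eq_sum fun n hn => ?_
  rw [Nat.sub_eq_zero_of_le (by simpa using hn), Nat.cast_zero, mul_zero]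

lemma hasSum_sub_mul_sub {a b f : ℕ → ℝ}
    (h₁ : Summable fun p : ℕ × ℕ => (a p.1 * a p.2 + b p.1 * b p.2) * f (p.1 + p.2))
    (h₂ : Summable fun p : ℕ × ℕ => 2 * a p.1 * b p.2 * f (p.1 + p.2)) :
    HasSum (fun p : ℕ × ℕ => (a - b) p.1 * (a - b) p.2 * f (p.1 + p.2))
      (∑' p : ℕ × ℕ, (a p.1 * a p.2 + b p.1 * b p.2) * f (p.1 + p.2) -
        ∑' p : ℕ × ℕ, 2 * a p.1 * b p.2 * f (p.1 + p.2)) := by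
  have hswap := (Equiv.prodComm ℕ ℕ).hasSum_iff.2 h₂.hasSum
  have hcross := (h₂.hasSum.add hswap).mul_left (1 / 2)
  rw [← two_mul, one_div, inv_mul_cancel_left₀ two_ne_zero] at hcross
  refine (h₁.hasSum.sub hcross).congr_fun fun p => ?_
  simp only [Pi.sub_apply, Function.comp_apply, Equiv.prodComm_apply, Prod.fst_swap,
    Prod.snd_swap, add_comm p.2]
  ring

theorem forall_convexOn_tsum_le_iff {a b : ℕ → ℝ} (hab : HasSum (a - b) 0) :
    (∀ φ : ℝ → ℝ, ConvexOn ℝ Set.univ φ →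
        Summable (fun p : ℕ × ℕ => (a p.1 * a p.2 + b p.1 * b p.2) * φ ((p.1 : ℝ) + p.2)) →
        Summable (fun p : ℕ × ℕ => 2 * a p.1 * b p.2 * φ ((p.1 : ℝ) + p.2)) →
        ∑' p : ℕ × ℕ, 2 * a p.1 * b p.2 * φ ((p.1 : ℝ) + p.2) ≤
          ∑' p : ℕ × ℕ, (a p.1 * a p.2 + b p.1 * b p.2) * φ ((p.1 : ℝ) + p.2)) ↔
      ∀ n, 0 ≤ seqConv (partialSum (a - b)) (partialSum (a - b)) n := by
  simp only [← Nat.cast_add]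
  constructor
  · intro h m
    let f : ℕ → ℝ := fun n => ((m + 1 - n : ℕ) : ℝ)
    have h₁ : Summable fun p : ℕ × ℕ => (a p.1 * a p.2 + b p.1 * b p.2) * f (p.1 + p.2) :=
      summable_mul_natCast_sub_add _ (m + 1)
    have h₂ : Summable fun p : ℕ × ℕ => 2 * a p.1 * b p.2 * f (p.1 + p.2) :=
      summable_mul_natCast_sub_add _ (m + 1)
    have hle := h _ (convexOn_max_sub ((m + 1 : ℕ) : ℝ))
    simp only [max_natCast_sub_eq] at hle
    rw [← tsum_mul_natCast_sub_add, (hasSum_sub_mul_sub h₁ h₂).tsum_eq]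
    exact sub_nonneg.2 (hle h₁ h₂)
  · intro hpos φ hφ h₁ h₂
    have hdiff := hasSum_sub_mul_sub (f := fun n => φ n) h₁ h₂
    rw [← sub_nonneg, ← hdiff.tsum_eq]
    exact tsum_mul_mul_add_nonneg (f := fun n : ℕ => φ n) hab hab hpos
      (monotone_sub_natCast_of_convexOn hφ) hdiff.summable

/-- The right-continuous step function taking the value `d n` on `[n, n + 1)` and vanishing on
`(-∞, 0)`: the distribution function of a measure on `ℕ` is one of these. -/
noncomputable def stepFun (d : ℕ → ℝ) (t : ℝ) : ℝ := if 0 ≤ t then d ⌊t⌋₊ else 0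

/-- The hat function supported on `[0, 2]` with peak `1` at `1`, which is the self-convolution of
the indicator of `[0, 1)`. -/
noncomputable def hat (x : ℝ) : ℝ := max 0 (1 - |x - 1|)

lemma stepFun_sub (d e : ℕ → ℝ) (t : ℝ) : stepFun (d - e) t = stepFun d t - stepFun e t := by
  unfold stepFun
  split_ifs <;> simp

lemma stepFun_eq_sum {d : ℕ → ℝ} {t : ℝ} {m : ℕ} (ht : t < m) :
    stepFun d t = ∑ i ∈ Finset.range m, d i * (Set.Ico (i : ℝ) (i + 1)).indicator 1 t := by
  unfold stepFun
  split_ifs with h0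
  · have hind : ∀ i : ℕ, (Set.Ico (i : ℝ) (i + 1)).indicator (1 : ℝ → ℝ) t =
        if ⌊t⌋₊ = i then 1 else 0 := fun i => by
      simp only [Set.indicator_apply, Set.mem_Ico, ← Nat.floor_eq_iff h0, Pi.one_apply]
    simp [hind, (Nat.floor_lt h0).2 ht]
  · refine (Finset.sum_eq_zero fun i _ => ?_).symm
    rw [Set.indicator_of_notMem, mul_zero]
    exact fun hi => h0 (i.cast_nonneg.trans hi.1)

lemma indicator_Ico_mul_indicator_Ico_sub (x i j : ℝ) :
    (fun t => (Set.Ico i (i + 1)).indicator (1 : ℝ → ℝ) t *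
      (Set.Ico j (j + 1)).indicator (1 : ℝ → ℝ) (x - t)) =
      (Set.Ico i (i + 1) ∩ Set.Ioc (x - j - 1) (x - j)).indicator 1 := by
  have hpre : (fun t => x - t) ⁻¹' Set.Ico j (j + 1) = Set.Ioc (x - j - 1) (x - j) := by
    rw [Set.preimage_const_sub_Ico, sub_sub]
  rw [Set.inter_indicator_one, ← hpre]
  rfl

lemma integrable_indicator_Ico_mul_indicator_Ico_sub (x i j : ℝ) :
    Integrable fun t => (Set.Ico i (i + 1)).indicator (1 : ℝ → ℝ) t *
      (Set.Ico j (j + 1)).indicator (1 : ℝ → ℝ) (x - t) := by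
  rw [indicator_Ico_mul_indicator_Ico_sub,
    integrable_indicator_iff (measurableSet_Ico.inter measurableSet_Ioc)]
  refine integrableOn_const ((measure_mono Set.inter_subset_left).trans_lt ?_).ne (by simp)
  simp

lemma fconv_indicator_Ico (x i j : ℝ) :
    fconv ((Set.Ico i (i + 1)).indicator 1) ((Set.Ico j (j + 1)).indicator 1) x =
      hat (x - (i + j)) := by
  have hIoc : volume.real (Set.Ico i (i + 1) ∩ Set.Ioc (x - j - 1) (x - j)) =
      volume.real (Set.Ioc i (i + 1) ∩ Set.Ioc (x - j - 1) (x - j)) :=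
    measureReal_congr (Ico_ae_eq_Ioc.inter (ae_eq_refl _))
  rw [fconv, indicator_Ico_mul_indicator_Ico_sub,
    integral_indicator_one (measurableSet_Ico.inter measurableSet_Ioc), hIoc,
    Set.Ioc_inter_Ioc, Real.volume_real_Ioc, hat, max_comm]
  congr 1
  rcases le_total i (x - j - 1) with h | h
  · rw [max_eq_right h, min_eq_left (by linarith), abs_of_nonneg (by linarith)]
    ring
  · rw [max_eq_left h, min_eq_right (by linarith), abs_of_nonpos (by linarith)]
    ring

lemma stepFun_of_neg (d : ℕ → ℝ) {t : ℝ} (ht : t < 0) : stepFun d t = 0 :=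
  if_neg (not_le.2 ht)

lemma stepFun_mul_stepFun_sub (d e : ℕ → ℝ) {x : ℝ} {m : ℕ} (hx : x < m) (t : ℝ) :
    stepFun d t * stepFun e (x - t) =
      ∑ n ∈ Finset.range m, ∑ k ∈ Finset.range (n + 1), d k * e (n - k) *
        ((Set.Ico (k : ℝ) (k + 1)).indicator 1 t *
          (Set.Ico ((n - k : ℕ) : ℝ) ((n - k : ℕ) + 1)).indicator 1 (x - t)) := by
  rw [Finset.sum_range_diag_flip m fun i j => d i * e j *
    ((Set.Ico (i : ℝ) (i + 1)).indicator 1 t * (Set.Ico (j : ℝ) (j + 1)).indicator 1 (x - t))]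
  have hrow : ∀ i ∈ Finset.range m, ∑ j ∈ Finset.range (m - i), d i * e j *
      ((Set.Ico (i : ℝ) (i + 1)).indicator 1 t * (Set.Ico (j : ℝ) (j + 1)).indicator 1 (x - t)) =
      d i * (Set.Ico (i : ℝ) (i + 1)).indicator 1 t * stepFun e (x - t) := fun i hi => by
    by_cases ht : t ∈ Set.Ico (i : ℝ) (i + 1)
    · have hlt : x - t < (m - i : ℕ) := by
        rw [Nat.cast_sub (Finset.mem_range.1 hi).le]
        linarith [ht.1]
      rw [stepFun_eq_sum hlt, Finset.mul_sum]
      exact Finset.sum_congr rfl fun j _ => by ring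
    · simp [Set.indicator_of_notMem ht]
  rw [Finset.sum_congr rfl hrow, ← Finset.sum_mul]
  rcases lt_or_ge t m with ht | ht
  · rw [← stepFun_eq_sum ht]
  · rw [stepFun_of_neg e (by linarith), mul_zero, mul_zero]

theorem fconv_stepFun (d e : ℕ → ℝ) (x : ℝ) :
    fconv (stepFun d) (stepFun e) x =
      ∑ n ∈ Finset.range (⌊x⌋₊ + 1), seqConv d e n * hat (x - n) := by
  have hx : x < (⌊x⌋₊ + 1 : ℕ) := by exact_mod_cast Nat.lt_floor_add_one x
  have hint : ∀ n k : ℕ, Integrable fun t => d k * e (n - k) *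
      ((Set.Ico (k : ℝ) (k + 1)).indicator (1 : ℝ → ℝ) t *
        (Set.Ico ((n - k : ℕ) : ℝ) ((n - k : ℕ) + 1)).indicator 1 (x - t)) := fun n k =>
    (integrable_indicator_Ico_mul_indicator_Ico_sub x _ _).const_mul _
  simp only [fconv, stepFun_mul_stepFun_sub d e hx]
  rw [integral_finsetSum _ fun n _ => integrable_finsetSum _ fun k _ => hint n k]
  refine Finset.sum_congr rfl fun n _ => ?_
  rw [integral_finsetSum _ fun k _ => hint n k, seqConv_eq_sum_range, Finset.sum_mul]
  refine Finset.sum_congr rfl fun k hk => ?_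
  have hkn : (k : ℝ) + (n - k : ℕ) = n := by
    rw [Nat.cast_sub (Finset.mem_range_succ_iff.1 hk), add_sub_cancel]
  rw [integral_const_mul, ← hkn, ← fconv_indicator_Ico, fconv]

lemma hat_nonneg (x : ℝ) : 0 ≤ hat x := le_max_left _ _

lemma hat_natCast_sub (m n : ℕ) : hat (((m + 1 : ℕ) : ℝ) - n) = if m = n then 1 else 0 := by
  have hcast : ((m + 1 : ℕ) : ℝ) - n - 1 = ((m - n : ℤ) : ℝ) := by
    push_cast
    ring
  split_ifs with h
  · simp [hat, h]
  · have habs : (1 : ℝ) ≤ |((m - n : ℤ) : ℝ)| := by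
      exact_mod_cast Int.one_le_abs (sub_ne_zero.2 (Nat.cast_injective.ne h))
    rw [hat, hcast, max_eq_left (sub_nonpos.2 habs)]

theorem forall_fconv_stepFun_nonneg_iff (d e : ℕ → ℝ) :
    (∀ x, 0 ≤ fconv (stepFun d) (stepFun e) x) ↔ ∀ n, 0 ≤ seqConv d e n := by
  constructor
  · intro h m
    have hm := h ((m + 1 : ℕ) : ℝ)
    simp only [fconv_stepFun, hat_natCast_sub, mul_ite, mul_one, mul_zero, Finset.sum_ite_eq,
      Nat.floor_natCast, Finset.mem_range] at hm
    rwa [if_pos (by omega)] at hm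
  · intro h x
    rw [fconv_stepFun]
    exact Finset.sum_nonneg fun n _ => mul_nonneg (h n) (hat_nonneg _)

section DistributionFunction

variable {μ : Measure ℝ} [IsFiniteMeasure μ]

lemma distFun_eq_stepFun (hμ : μ (Set.range fun k : ℕ => (k : ℝ))ᶜ = 0) :
    distFun μ = stepFun (partialSum fun k => μ.real {(k : ℝ)}) := by
  have hae : ∀ᵐ x ∂μ, ∃ k : ℕ, (k : ℝ) = x := hμ
  ext t
  rw [distFun, ← measureReal_def, stepFun]
  split_ifs with ht
  · have hset : (Set.Iic t : Set ℝ) =ᵐ[μ]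
        (((Finset.range (⌊t⌋₊ + 1)).map Nat.castEmbedding : Finset ℝ) : Set ℝ) := by
      refine eventuallyEq_set.2 ?_
      filter_upwards [hae] with x ⟨k, hk⟩
      simp [← hk, ← Nat.le_floor_iff ht]
    rw [measureReal_congr hset, ← sum_measureReal_singleton, Finset.sum_map]
    rfl
  · have hset : (Set.Iic t : Set ℝ) =ᵐ[μ] (∅ : Set ℝ) := by
      refine eventuallyEq_set.2 ?_
      filter_upwards [hae] with x ⟨k, hk⟩
      simpa [← hk] using (not_le.1 ht).trans_le k.cast_nonneg
    rw [measureReal_congr hset, measureReal_empty]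

lemma hasSum_measureReal_singleton (hμ : μ (Set.range fun k : ℕ => (k : ℝ))ᶜ = 0) :
    HasSum (fun k : ℕ => μ.real {(k : ℝ)}) (μ.real Set.univ) := by
  rw [hasSum_iff_tendsto_nat_of_nonneg fun _ => measureReal_nonneg]
  refine (tendsto_add_atTop_iff_nat 1).1 ?_
  have h : Tendsto (distFun μ) atTop (𝓝 (μ.real Set.univ)) :=
    (ENNReal.tendsto_toReal (measure_ne_top μ _)).comp (tendsto_measure_Iic_atTop μ)
  refine (h.comp tendsto_natCast_atTop_atTop).congr fun n => ?_
  rw [distFun_eq_stepFun hμ]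
  simp [stepFun, partialSum]

end DistributionFunction

theorem stmt6_general (μ ν : Measure ℝ) [IsFiniteMeasure μ] [IsFiniteMeasure ν]
    (hmass : μ Set.univ = ν Set.univ) (a b : ℕ → ℝ)
    (hμc : μ (Set.range (fun k : ℕ => (k : ℝ)))ᶜ = 0)
    (hνc : ν (Set.range (fun k : ℕ => (k : ℝ)))ᶜ = 0)
    (ha : ∀ k : ℕ, a k = (μ {(k : ℝ)}).toReal) (hb : ∀ k : ℕ, b k = (ν {(k : ℝ)}).toReal) :
    ((∀ φ : ℝ → ℝ, ConvexOn ℝ Set.univ φ →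
        Summable (fun p : ℕ × ℕ => (a p.1 * a p.2 + b p.1 * b p.2) * φ ((p.1 : ℝ) + p.2)) →
        Summable (fun p : ℕ × ℕ => 2 * a p.1 * b p.2 * φ ((p.1 : ℝ) + p.2)) →
        ∑' p : ℕ × ℕ, 2 * a p.1 * b p.2 * φ ((p.1 : ℝ) + p.2) ≤
          ∑' p : ℕ × ℕ, (a p.1 * a p.2 + b p.1 * b p.2) * φ ((p.1 : ℝ) + p.2)) ↔
      (∀ x : ℝ, 0 ≤ fconv (fun t => distFun μ t - distFun ν t)
        (fun t => distFun μ t - distFun ν t) x)) ∧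
    ((∀ x : ℝ, 0 ≤ fconv (fun t => distFun μ t - distFun ν t)
        (fun t => distFun μ t - distFun ν t) x) ↔
      (∀ i : ℕ, 0 ≤ ∑ j ∈ Finset.range (i + 1),
        (distFun ν (j : ℝ) - distFun μ (j : ℝ)) *
          (distFun ν ((i - j : ℕ) : ℝ) - distFun μ ((i - j : ℕ) : ℝ)))) := by
  have hF : distFun μ = stepFun (partialSum a) := by
    rw [funext ha]
    exact distFun_eq_stepFun hμc
  have hG : distFun ν = stepFun (partialSum b) := by
    rw [funext hb]
    exact distFun_eq_stepFun hνc
  have hab : HasSum (a - b) 0 := by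
    have h := (hasSum_measureReal_singleton hμc).sub (hasSum_measureReal_singleton hνc)
    rw [measureReal_def, hmass, ← measureReal_def, sub_self] at h
    rw [funext ha, funext hb]
    exact h
  have hstep : (fun t => distFun μ t - distFun ν t) = stepFun (partialSum (a - b)) := by
    ext t
    rw [partialSum_sub, stepFun_sub, hF, hG]
  have hdisc (k : ℕ) : distFun ν k - distFun μ k = -partialSum (a - b) k := by
    rw [← neg_sub, congrFun hstep k]
    simp [stepFun]
  simpa only [hstep, hdisc, neg_mul_neg, ← seqConv_eq_sum_range,
    forall_fconv_stepFun_nonneg_iff, and_true] using forall_convexOn_tsum_le_iff hab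

/-- Theorem 2.6: For discrete probability distributions μ, ν
concentrated on the non-negative integers, with point masses (a_k), (b_k) and finite
first moments, the following are equivalent:
(1) the Raşa-type inequality holds for all convex φ (for which the series converge);
(2) (F−G)∗(F−G) ≥ 0;
(3) all discrete self-convolution coefficients of G−F are non-negative. -/
theorem stmt6 (μ ν : Measure ℝ) [IsProbabilityMeasure μ] [IsProbabilityMeasure ν]
    (a b : ℕ → ℝ)
    (hμc : μ (Set.range (fun k : ℕ => (k : ℝ)))ᶜ = 0)
    (hνc : ν (Set.range (fun k : ℕ => (k : ℝ)))ᶜ = 0)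
    (ha : ∀ k : ℕ, a k = (μ {(k : ℝ)}).toReal) (hb : ∀ k : ℕ, b k = (ν {(k : ℝ)}).toReal)
    (hμ1 : Integrable (fun x : ℝ => |x|) μ) (hν1 : Integrable (fun x : ℝ => |x|) ν) :
    ((∀ φ : ℝ → ℝ, ConvexOn ℝ Set.univ φ →
        Summable (fun p : ℕ × ℕ => (a p.1 * a p.2 + b p.1 * b p.2) * φ ((p.1 : ℝ) + p.2)) →
        Summable (fun p : ℕ × ℕ => 2 * a p.1 * b p.2 * φ ((p.1 : ℝ) + p.2)) →
        ∑' p : ℕ × ℕ, 2 * a p.1 * b p.2 * φ ((p.1 : ℝ) + p.2) ≤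
          ∑' p : ℕ × ℕ, (a p.1 * a p.2 + b p.1 * b p.2) * φ ((p.1 : ℝ) + p.2)) ↔
      (∀ x : ℝ, 0 ≤ fconv (fun t => distFun μ t - distFun ν t)
        (fun t => distFun μ t - distFun ν t) x)) ∧
    ((∀ x : ℝ, 0 ≤ fconv (fun t => distFun μ t - distFun ν t)
        (fun t => distFun μ t - distFun ν t) x) ↔
      (∀ i : ℕ, 0 ≤ ∑ j ∈ Finset.range (i + 1),
        (distFun ν (j : ℝ) - distFun μ (j : ℝ)) *
          (distFun ν ((i - j : ℕ) : ℝ) - distFun μ ((i - j : ℕ) : ℝ)))) :=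
  stmt6_general μ ν (by simp) a b hμc hνc ha hb
end

section
/- Let μ and ν be discrete probability distributions concentrated on the non-negative integers with finite first moments, let F, G be their distribution functions, and let D(i) = Σ_{j=0}^{i} (G−F)(j)·(G−F)(i−j) for i ∈ ℕ (with D(i) = 0 for i < 0). Then for every integer i ≥ 0 and every x ∈ [i, i+1]: ((G−F)*(G−F))(x) = (x−i)·D(i) + (i+1−x)·D(i−1). Consequently, ((G−F)*(G−F))(x) ≥ 0 for all x ∈ ℝ if and only if D(i) ≥ 0 for all i ∈ ℕ. -/
open MeasureTheory Set

/-!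
Since `d = G - F` is constant on each `[n, n + 1)` and vanishes on the negative axis,
`(d * d)(x) = ∑ j, d j * ∫ t in x - j - 1..x - j, d t`. The last integral is the average of `d` over
a window of length one, which meets at most two steps, so it interpolates linearly between
`d (i - j)` and `d (i - j - 1)` as `x` runs through `[i, i + 1]`. An interpolation of nonnegative
values is nonnegative, and conversely `D i` is the value of `d * d` at `i + 1`.
-/

lemma eqOn_Ico_of_eq_floor {α : Type*} {g : ℝ → α} (hg : ∀ t, g t = g ⌊t⌋) (n : ℤ) :
    (Ico (n : ℝ) (n + 1)).EqOn g fun _ => g n := fun t ht => by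
  rw [hg t, Int.floor_eq_iff.2 ht]

section FloorDetermined

variable {E : Type*} [NormedAddCommGroup E] {g : ℝ → E}

lemma intervalIntegrable_of_eq_floor (hg : ∀ t, g t = g ⌊t⌋) (a b : ℝ) :
    IntervalIntegrable g volume a b := by
  have g_meas : StronglyMeasurable g := by
    rw [funext hg]
    exact (StronglyMeasurable.of_discrete (f := fun n : ℤ => g n)).comp_measurable
      Int.measurable_floor
  obtain ⟨C, hC⟩ : BddAbove ((fun n : ℤ => ‖g n‖) '' Icc ⌊min a b⌋ ⌊max a b⌋) :=
    ((finite_Icc _ _).image _).bddAbove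
  have g_bdd : ∀ t ∈ uIoc a b, ‖g t‖ ≤ C := fun t ht => by
    rw [hg t]
    exact hC ⟨⌊t⌋, ⟨Int.floor_mono ht.1.le, Int.floor_mono ht.2⟩, rfl⟩
  rw [intervalIntegrable_iff]
  exact Measure.integrableOn_of_bounded measure_Ioc_lt_top.ne g_meas.aestronglyMeasurable
    (ae_restrict_of_forall_mem measurableSet_uIoc g_bdd)

variable [NormedSpace ℝ E] [CompleteSpace E]

lemma integral_of_eq_floor_of_le_add_one (hg : ∀ t, g t = g ⌊t⌋) {n : ℤ} {a b : ℝ}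
    (hna : n ≤ a) (hab : a ≤ b) (hbn : b ≤ n + 1) :
    ∫ t in a..b, g t = (b - a) • g n := by
  have g_eq : (Ioo a b).EqOn g fun _ => g n := fun _ ht =>
    eqOn_Ico_of_eq_floor hg n ⟨hna.trans ht.1.le, ht.2.trans_le hbn⟩
  rw [intervalIntegral.integral_congr_Ioo_of_le hab g_eq, intervalIntegral.integral_const]

lemma integral_sub_one_self_of_eq_floor (hg : ∀ t, g t = g ⌊t⌋) {n : ℤ} {y : ℝ}
    (hy : y ∈ Icc (n : ℝ) (n + 1)) :
    ∫ t in (y - 1)..y, g t = (y - n) • g n + (n + 1 - y) • g (n - 1) := by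
  have left_part : ∫ t in (y - 1)..n, g t = (n + 1 - y) • g (n - 1) := by
    rw [integral_of_eq_floor_of_le_add_one hg (n := n - 1) (by push_cast; linarith [hy.1])
      (by linarith [hy.2]) (by push_cast; linarith)]
    push_cast
    congr 1
    ring
  rw [← intervalIntegral.integral_add_adjacent_intervals (intervalIntegrable_of_eq_floor hg _ n)
    (intervalIntegrable_of_eq_floor hg n _), left_part,
    integral_of_eq_floor_of_le_add_one hg le_rfl hy.1 hy.2, add_comm]

end FloorDetermined

/-- A right-continuous step function on the line that jumps only at natural numbers and vanishes on
the negative axis: what is left of a distribution function of a measure concentrated on `ℕ` once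
monotonicity is dropped, so that differences of two such functions are included. -/
structure IsNatStep (f : ℝ → ℝ) : Prop where
  eq_floor (t : ℝ) : f t = f ⌊t⌋
  eq_zero_of_neg : ∀ t < 0, f t = 0

lemma IsNatStep.sub {f g : ℝ → ℝ} (hf : IsNatStep f) (hg : IsNatStep g) :
    IsNatStep fun t => f t - g t where
  eq_floor t := by rw [← hf.eq_floor, ← hg.eq_floor]
  eq_zero_of_neg t ht := by rw [hf.eq_zero_of_neg t ht, hg.eq_zero_of_neg t ht, sub_zero]

section DistFun

variable {μ : Measure ℝ}

lemma distFun_eq_distFun_floor (hμ : ∀ᵐ y ∂μ, y ∈ range ((↑) : ℤ → ℝ)) (t : ℝ) :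
    distFun μ t = distFun μ ⌊t⌋ := by
  refine congrArg ENNReal.toReal (measure_congr (Filter.eventuallyEq_set.2 ?_))
  filter_upwards [hμ]
  rintro _ ⟨k, rfl⟩
  simp only [mem_Iic, Int.cast_le, Int.le_floor]

lemma distFun_eq_zero_of_neg (hμ : ∀ᵐ y ∂μ, 0 ≤ y) {t : ℝ} (ht : t < 0) : distFun μ t = 0 := by
  have Iic_null : μ (Iic t) = 0 :=
    measure_mono_null (fun _ hy => not_le.2 (lt_of_le_of_lt hy ht)) (ae_iff.1 hμ)
  rw [distFun, Iic_null, ENNReal.toReal_zero]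

lemma isNatStep_distFun (hμ : ∀ᵐ y ∂μ, y ∈ range ((↑) : ℕ → ℝ)) : IsNatStep (distFun μ) where
  eq_floor := distFun_eq_distFun_floor <| hμ.mono <| by
    rintro _ ⟨k, rfl⟩
    exact ⟨k, Int.cast_natCast k⟩
  eq_zero_of_neg _ := distFun_eq_zero_of_neg <| hμ.mono <| by
    rintro _ ⟨k, rfl⟩
    exact k.cast_nonneg

end DistFun

section FConv

variable {f g : ℝ → ℝ}

lemma fconv_eq_setIntegral_Icc (hf : ∀ t < 0, f t = 0) (hg : ∀ t < 0, g t = 0) {x b : ℝ}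
    (hxb : x ≤ b) : fconv f g x = ∫ t in Icc 0 b, f t * g (x - t) := by
  refine (setIntegral_eq_integral_of_forall_compl_eq_zero fun t ht => ?_).symm
  by_cases ht0 : t < 0
  · rw [hf t ht0, zero_mul]
  · have hbt : b < t := not_le.1 fun htb => ht ⟨not_lt.1 ht0, htb⟩
    rw [hg (x - t) (by linarith), mul_zero]

lemma fconv_eq_zero_of_neg (hf : ∀ t < 0, f t = 0) (hg : ∀ t < 0, g t = 0) {x : ℝ} (hx : x < 0) :
    fconv f g x = 0 := by
  rw [fconv_eq_setIntegral_Icc hf hg le_rfl, Icc_eq_empty hx.not_ge, setIntegral_empty]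

/-- The Cauchy product of the restrictions of `f` and `g` to `ℕ`; for `f = g = G - F` it is the
sequence `D`. -/
def natConv (f g : ℝ → ℝ) (n : ℕ) : ℝ :=
  ∑ j ∈ Finset.range (n + 1), f j * g ((n - j : ℕ) : ℝ)

lemma natConv_eq_sum_sub (f g : ℝ → ℝ) (n : ℕ) :
    natConv f g n = ∑ j ∈ Finset.range (n + 1), f j * g (n - j) :=
  Finset.sum_congr rfl fun _ hj => by rw [Nat.cast_sub (Finset.mem_range_succ_iff.1 hj)]

lemma sum_mul_sub_sub_one (hg : ∀ t < 0, g t = 0) (n : ℕ) :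
    ∑ j ∈ Finset.range (n + 1), f j * g (n - j - 1) = if n = 0 then 0 else natConv f g (n - 1) := by
  rw [Finset.sum_range_succ, hg (n - n - 1) (by norm_num), mul_zero, add_zero]
  cases n with
  | zero => rfl
  | succ m =>
    rw [if_neg m.succ_ne_zero, Nat.add_sub_cancel, natConv_eq_sum_sub]
    refine Finset.sum_congr rfl fun j _ => ?_
    rw [Nat.cast_succ, sub_right_comm, add_sub_cancel_right]

end FConv

namespace IsNatStep

variable {f g : ℝ → ℝ}

lemma mul_comp_sub_eqOn_Ioo (hf : IsNatStep f) (g : ℝ → ℝ) (x : ℝ) (j : ℕ) :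
    (Ioo (j : ℝ) (j + 1)).EqOn (fun t => f t * g (x - t)) fun t => f j * g (x - t) := fun t ht => by
  have f_eq : f t = f j := by
    simpa only [Int.cast_natCast] using eqOn_Ico_of_eq_floor hf.eq_floor j (Ioo_subset_Ico_self ht)
  simp only [f_eq]

lemma intervalIntegrable_mul_comp_sub (hf : IsNatStep f) (hg : IsNatStep g) (x : ℝ) (j : ℕ) :
    IntervalIntegrable (fun t => f t * g (x - t)) volume j (j + 1) := by
  have shifted : IntervalIntegrable (fun t => g (x - t)) volume j (j + 1) := by
    simpa only [sub_sub_cancel] using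
      (intervalIntegrable_of_eq_floor hg.eq_floor (x - j) (x - (j + 1))).comp_sub_left x
  refine (shifted.const_mul (f j)).congr_uIoo ?_
  rw [uIoo_of_le (by linarith)]
  exact (hf.mul_comp_sub_eqOn_Ioo g x j).symm

lemma integral_mul_comp_sub (hf : IsNatStep f) (hg : IsNatStep g) {i : ℕ} {x : ℝ}
    (hx : x ∈ Icc (i : ℝ) (i + 1)) (j : ℕ) :
    ∫ t in (j : ℝ)..j + 1, f t * g (x - t) =
      (x - i) * (f j * g (i - j)) + (i + 1 - x) * (f j * g (i - j - 1)) := by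
  have window : ∫ t in (x - j - 1)..x - j, g t =
      (x - i) * g (i - j) + (i + 1 - x) * g (i - j - 1) := by
    rw [integral_sub_one_self_of_eq_floor hg.eq_floor (n := (i : ℤ) - j)
      ⟨by push_cast; linarith [hx.1], by push_cast; linarith [hx.2]⟩]
    push_cast
    simp only [smul_eq_mul]
    ring
  calc ∫ t in (j : ℝ)..j + 1, f t * g (x - t)
      = ∫ t in (j : ℝ)..j + 1, f j * g (x - t) :=
        intervalIntegral.integral_congr_Ioo_of_le (by linarith) (hf.mul_comp_sub_eqOn_Ioo g x j)
    _ = f j * ∫ t in (x - j - 1)..x - j, g t := by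
        rw [intervalIntegral.integral_const_mul, intervalIntegral.integral_comp_sub_left,
          sub_add_eq_sub_sub]
    _ = _ := by rw [window]; ring

theorem fconv_eq_interpolation (hf : IsNatStep f) (hg : IsNatStep g) {i : ℕ} {x : ℝ}
    (hx : x ∈ Icc (i : ℝ) (i + 1)) :
    fconv f g x =
      (x - i) * natConv f g i + (i + 1 - x) * if i = 0 then 0 else natConv f g (i - 1) := by
  have cells : ∑ j ∈ Finset.range (i + 1), ∫ t in (j : ℝ)..j + 1, f t * g (x - t) =
      ∫ t in (0 : ℝ)..i + 1, f t * g (x - t) := by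
    simpa only [Nat.cast_add_one, Nat.cast_zero] using
      intervalIntegral.sum_integral_adjacent_intervals (a := Nat.cast) (n := i + 1) fun j _ => by
        simpa only [Nat.cast_add_one] using hf.intervalIntegrable_mul_comp_sub hg x j
  calc fconv f g x
      = ∑ j ∈ Finset.range (i + 1), ∫ t in (j : ℝ)..j + 1, f t * g (x - t) := by
        rw [fconv_eq_setIntegral_Icc hf.eq_zero_of_neg hg.eq_zero_of_neg hx.2,
          cells, intervalIntegral.integral_of_le (by positivity), integral_Icc_eq_integral_Ioc]
    _ = (x - i) * ∑ j ∈ Finset.range (i + 1), f j * g (i - j) +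
          (i + 1 - x) * ∑ j ∈ Finset.range (i + 1), f j * g (i - j - 1) := by
        simp only [hf.integral_mul_comp_sub hg hx, Finset.sum_add_distrib, Finset.mul_sum]
    _ = _ := by rw [← natConv_eq_sum_sub, sum_mul_sub_sub_one hg.eq_zero_of_neg]

lemma fconv_natCast_add_one (hf : IsNatStep f) (hg : IsNatStep g) (i : ℕ) :
    fconv f g (i + 1) = natConv f g i := by
  rw [hf.fconv_eq_interpolation hg ⟨by linarith, le_rfl⟩, add_sub_cancel_left, one_mul, sub_self,
    zero_mul, add_zero]

theorem forall_fconv_nonneg_iff (hf : IsNatStep f) (hg : IsNatStep g) :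
    (∀ x, 0 ≤ fconv f g x) ↔ ∀ i, 0 ≤ natConv f g i := by
  refine ⟨fun h i => hf.fconv_natCast_add_one hg i ▸ h (i + 1), fun h x => ?_⟩
  rcases lt_or_ge x 0 with hx | hx
  · exact (fconv_eq_zero_of_neg hf.eq_zero_of_neg hg.eq_zero_of_neg hx).ge
  · have floor_le : (⌊x⌋₊ : ℝ) ≤ x := Nat.floor_le hx
    have le_floor_add_one : x ≤ ⌊x⌋₊ + 1 := (Nat.lt_floor_add_one x).le
    have previous_nonneg : 0 ≤ if ⌊x⌋₊ = 0 then 0 else natConv f g (⌊x⌋₊ - 1) := by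
      split_ifs
      exacts [le_rfl, h _]
    rw [hf.fconv_eq_interpolation hg ⟨floor_le, le_floor_add_one⟩]
    exact add_nonneg (mul_nonneg (sub_nonneg.2 floor_le) (h _))
      (mul_nonneg (sub_nonneg.2 le_floor_add_one) previous_nonneg)

end IsNatStep

theorem stmt8_general {f g : ℝ → ℝ} (hf : IsNatStep f) (hg : IsNatStep g) :
    (∀ i : ℕ, ∀ x ∈ Icc (i : ℝ) (i + 1),
        fconv f g x =
          (x - i) * natConv f g i + (i + 1 - x) * if i = 0 then 0 else natConv f g (i - 1)) ∧
      ((∀ x, 0 ≤ fconv f g x) ↔ ∀ i, 0 ≤ natConv f g i) :=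
  ⟨fun _ _ => hf.fconv_eq_interpolation hg, hf.forall_fconv_nonneg_iff hg⟩

/-- For discrete probability distributions μ, ν on the non-negative
integers with finite first moments, the convolution (G−F)∗(G−F) interpolates linearly
between the discrete convolution coefficients D(i); consequently (G−F)∗(G−F) ≥ 0
everywhere iff all D(i) ≥ 0. -/
theorem stmt8 (μ ν : Measure ℝ) [IsProbabilityMeasure μ] [IsProbabilityMeasure ν]
    (hμc : μ (Set.range (fun k : ℕ => (k : ℝ)))ᶜ = 0)
    (hνc : ν (Set.range (fun k : ℕ => (k : ℝ)))ᶜ = 0)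
    (hμ1 : Integrable (fun x : ℝ => |x|) μ) (hν1 : Integrable (fun x : ℝ => |x|) ν)
    (d : ℝ → ℝ) (hd : d = fun t => distFun ν t - distFun μ t)
    (D : ℕ → ℝ) (hD : D = fun i => ∑ j ∈ Finset.range (i + 1),
      d (j : ℝ) * d (((i - j : ℕ) : ℝ))) :
    (∀ i : ℕ, ∀ x ∈ Set.Icc (i : ℝ) ((i : ℝ) + 1),
        fconv d d x = (x - (i : ℝ)) * D i +
          ((i : ℝ) + 1 - x) * (if i = 0 then 0 else D (i - 1))) ∧
      ((∀ x : ℝ, 0 ≤ fconv d d x) ↔ ∀ i : ℕ, 0 ≤ D i) := by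
  have d_step : IsNatStep d :=
    hd ▸ (isNatStep_distFun (mem_ae_iff.2 hνc)).sub (isNatStep_distFun (mem_ae_iff.2 hμc))
  exact hD ▸ stmt8_general d_step d_step
end

section
/- Let p ≺ q be m-tuples of non-negative integers satisfying condition (S). Then the polynomial W^q − W^p can be written as Σ_{1≤u<v≤m} (x_u − x_v)² R_{u,v}(x₁,…,x_m), where each R_{u,v} is a polynomial with non-negative coefficients; explicitly, R_{u,v}(x₁,…,x_m) = Σ_{π∈Π, π(l₁)=u, π(l₂)=v} Σ_{j=q̂_{l₂}}^{p̂_{l₁}−1} (1/m!)·x_u^j x_v^{p̂_{l₁}+q̂_{l₂}−1−j} ∏_{l≠l₁,l₂} x_{π(l)}^{p̂_l}, where l₁ < l₂ are the indices from condition (S). -/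
open MeasureTheory Set

/-- The nonincreasing rearrangement of an m-tuple of naturals. -/
def sortDesc {m : ℕ} (p : Fin m → ℕ) : Fin m → ℕ := fun i => p (Tuple.sort p i.rev)

/-- `Majorizes p q` means `p ≺ q`, i.e. `q` majorizes `p`. -/
def Majorizes {m : ℕ} (p q : Fin m → ℕ) : Prop :=
  (∑ l, sortDesc p l) = (∑ l, sortDesc q l) ∧
    ∀ k : Fin m, ∑ l ∈ Finset.Iic k, sortDesc p l ≤ ∑ l ∈ Finset.Iic k, sortDesc q l

/-- Condition (S) for a pair `p ≺ q`. -/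
def CondS {m : ℕ} (p q : Fin m → ℕ) : Prop :=
  ∃ l₁ l₂ : Fin m, l₁ < l₂ ∧ sortDesc q l₁ = sortDesc p l₁ + 1 ∧
    sortDesc q l₂ + 1 = sortDesc p l₂ ∧
    ∀ l, l ≠ l₁ → l ≠ l₂ → sortDesc q l = sortDesc p l

/-- The symmetrized monomial `W^p(x₁,…,x_m) = (1/m!) Σ_π Π_l x_{π(l)}^{p_l}`. -/
noncomputable def Wpoly {m : ℕ} (p : Fin m → ℕ) (x : Fin m → ℝ) : ℝ :=
  ((m.factorial : ℝ))⁻¹ * ∑ π : Equiv.Perm (Fin m), ∏ l, x (π l) ^ p l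

/-- The convolution polynomial of measures corresponding to `W^p`. -/
noncomputable def Wmeas {m : ℕ} (p : Fin m → ℕ) (μ : Fin m → Measure ℝ) : Measure ℝ :=
  ((m.factorial : ENNReal))⁻¹ •
    ∑ π : Equiv.Perm (Fin m), convList (List.ofFn fun l => convPow (μ (π l)) (p l))

/-!
Symmetrizing over `S_m` allows `p` and `q` to be replaced by their nonincreasing rearrangements
`a` and `b`, which differ only at `i = l₁` and `j = l₂`. Group the permutations into pairs
`{π, π * swap i j}`, each represented by the `π` with `π i < π j`. With `s = x (π i)` and
`t = x (π j)`, such a pair contributes to `m! (W^q - W^p)` the product `∏_{l ≠ i, j} x (π l) ^ a l`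
times `(s - t) (s ^ a i t ^ b j - s ^ b j t ^ a i)`, and a geometric sum extracts a second factor
`s - t`, leaving non-negative coefficients because `b j ≤ a i`.
-/

section FiniteSums

variable {ι α M : Type*} [Fintype ι]

theorem prod_eq_mul_mul_prod_filter_ne [DecidableEq ι] [CommMonoid M] {i j : ι} (hij : i ≠ j)
    (f : ι → M) :
    ∏ l, f l = f i * f j * ∏ l ∈ Finset.univ.filter (fun l => l ≠ i ∧ l ≠ j), f l := by
  have h_erase : Finset.univ.filter (fun l => l ≠ i ∧ l ≠ j) = (Finset.univ.erase i).erase j := by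
    ext l
    simp [and_comm]
  rw [h_erase, mul_assoc, Finset.mul_prod_erase _ _ (by simp [hij.symm]),
    Finset.mul_prod_erase _ _ (Finset.mem_univ i)]

theorem sum_sum_filter_sum_fiber [DecidableEq ι] [Fintype α] [AddCommMonoid M]
    (r : ι → ι → Prop) [DecidableRel r] (f g : α → ι) (G : ι → ι → α → M) :
    ∑ u, ∑ v ∈ Finset.univ.filter (fun v => r u v),
        ∑ a ∈ Finset.univ.filter (fun a => f a = u ∧ g a = v), G u v a =
      ∑ a ∈ Finset.univ.filter (fun a => r (f a) (g a)), G (f a) (g a) a := by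
  calc ∑ u, ∑ v ∈ Finset.univ.filter (fun v => r u v),
        ∑ a ∈ Finset.univ.filter (fun a => f a = u ∧ g a = v), G u v a
      = ∑ u, ∑ a, ∑ v, if f a = u then if g a = v then if r u v then G u v a else 0 else 0
          else 0 := by
        refine Finset.sum_congr rfl fun u _ => ?_
        rw [Finset.sum_comm, Finset.sum_filter]
        refine Finset.sum_congr rfl fun v _ => ?_
        rw [Finset.sum_filter]
        split_ifs <;> simp [ite_and]
    _ = ∑ a ∈ Finset.univ.filter (fun a => r (f a) (g a)), G (f a) (g a) a := by
        rw [Finset.sum_comm, Finset.sum_filter]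
        simp

theorem sum_perm_eq_sum_filter_lt_add_mul_swap [LinearOrder ι] [AddCommMonoid M] {i j : ι}
    (hij : i ≠ j) (F : Equiv.Perm ι → M) :
    ∑ π, F π = ∑ π ∈ Finset.univ.filter (fun π : Equiv.Perm ι => π i < π j),
      (F π + F (π * Equiv.swap i j)) := by
  have h_swap : ∑ π ∈ Finset.univ.filter (fun π : Equiv.Perm ι => ¬ π i < π j), F π =
      ∑ π ∈ Finset.univ.filter (fun π : Equiv.Perm ι => π i < π j), F (π * Equiv.swap i j) := by
    refine (Finset.sum_equiv (Equiv.mulRight (Equiv.swap i j)) (fun π => ?_) fun _ _ => rfl).symm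
    have h_ne : π i ≠ π j := π.injective.ne hij
    simp [h_ne.le_iff_lt]
  rw [Finset.sum_add_distrib, ← h_swap, Finset.sum_filter_add_sum_filter_not]

end FiniteSums

section UnitTransfer

variable {ι R : Type*} [Fintype ι] [CommRing R]

theorem sub_mul_sum_Ico_pow_mul_pow (s t : R) {m n : ℕ} (hmn : m ≤ n) :
    (s - t) * ∑ k ∈ Finset.Ico m n, s ^ k * t ^ (n + m - 1 - k) =
      s ^ n * t ^ m - s ^ m * t ^ n := by
  have h_factor : ∑ k ∈ Finset.Ico m n, s ^ k * t ^ (n + m - 1 - k) =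
      t ^ m * ∑ k ∈ Finset.Ico m n, s ^ k * t ^ (n - 1 - k) := by
    rw [Finset.mul_sum]
    refine Finset.sum_congr rfl fun k hk => ?_
    have h_exp : n + m - 1 - k = m + (n - 1 - k) := by
      have := Finset.mem_Ico.mp hk
      omega
    rw [h_exp, pow_add]
    ring
  have h_pow : t ^ n = t ^ m * t ^ (n - m) := (pow_mul_pow_sub t hmn).symm
  rw [h_factor, h_pow]
  linear_combination t ^ m * mul_geom_sum₂_Ico s t hmn

theorem prod_pow_sub_add_swap [DecidableEq ι] {a b : ι → ℕ} {i j : ι} (hij : i ≠ j)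
    (hi : b i = a i + 1) (hj : b j + 1 = a j) (hba : b j ≤ a i)
    (h_off : ∀ l, l ≠ i → l ≠ j → b l = a l) (y : ι → R) :
    (∏ l, y l ^ b l - ∏ l, y l ^ a l) +
        (∏ l, y (Equiv.swap i j l) ^ b l - ∏ l, y (Equiv.swap i j l) ^ a l) =
      (y i - y j) ^ 2 * ((∑ k ∈ Finset.Ico (b j) (a i), y i ^ k * y j ^ (a i + b j - 1 - k)) *
        ∏ l ∈ Finset.univ.filter (fun l => l ≠ i ∧ l ≠ j), y l ^ a l) := by
  have h_split (z : ι → R) (c : ι → ℕ) (hz : ∀ l, l ≠ i → l ≠ j → z l = y l)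
      (hc : ∀ l, l ≠ i → l ≠ j → c l = a l) : ∏ l, z l ^ c l = z i ^ c i * z j ^ c j *
        ∏ l ∈ Finset.univ.filter (fun l => l ≠ i ∧ l ≠ j), y l ^ a l := by
    rw [prod_eq_mul_mul_prod_filter_ne hij]
    congr 1
    refine Finset.prod_congr rfl fun l hl => ?_
    obtain ⟨hli, hlj⟩ := (Finset.mem_filter.mp hl).2
    rw [hz l hli hlj, hc l hli hlj]
  have h_swap (l : ι) (hli : l ≠ i) (hlj : l ≠ j) : y (Equiv.swap i j l) = y l := by
    rw [Equiv.swap_apply_of_ne_of_ne hli hlj]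
  rw [h_split y b (fun _ _ _ => rfl) h_off, h_split y a (fun _ _ _ => rfl) fun _ _ _ => rfl,
    h_split (fun l => y (Equiv.swap i j l)) b h_swap h_off,
    h_split (fun l => y (Equiv.swap i j l)) a h_swap fun _ _ _ => rfl,
    Equiv.swap_apply_left, Equiv.swap_apply_right, hi, ← hj]
  linear_combination (-(y i - y j) *
    ∏ l ∈ Finset.univ.filter (fun l => l ≠ i ∧ l ≠ j), y l ^ a l) *
      sub_mul_sum_Ico_pow_mul_pow (y i) (y j) hba

-- `c` stands for the normalization `1/m!`; taking `R = MvPolynomial ι ℝ` and `x = MvPolynomial.X`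
-- gives the identity between polynomials.
theorem stmt13_general [LinearOrder ι] {a b : ι → ℕ} {i j : ι} (hij : i ≠ j)
    (hi : b i = a i + 1) (hj : b j + 1 = a j) (hba : b j ≤ a i)
    (h_off : ∀ l, l ≠ i → l ≠ j → b l = a l) (c : R) (x : ι → R) :
    c * ∑ π : Equiv.Perm ι, ∏ l, x (π l) ^ b l - c * ∑ π : Equiv.Perm ι, ∏ l, x (π l) ^ a l =
      ∑ u : ι, ∑ v ∈ Finset.univ.filter (fun v => u < v),
        (x u - x v) ^ 2 *
          ∑ π ∈ Finset.univ.filter (fun π : Equiv.Perm ι => π i = u ∧ π j = v),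
            ∑ k ∈ Finset.Ico (b j) (a i),
              c * x u ^ k * x v ^ (a i + b j - 1 - k) *
                ∏ l ∈ Finset.univ.filter (fun l => l ≠ i ∧ l ≠ j), x (π l) ^ a l := by
  simp only [Finset.mul_sum _ _ ((_ - _) ^ 2)]
  rw [sum_sum_filter_sum_fiber (· < ·) (fun π : Equiv.Perm ι => π i) (fun π => π j),
    ← mul_sub, ← Finset.sum_sub_distrib, sum_perm_eq_sum_filter_lt_add_mul_swap hij,
    Finset.mul_sum]
  refine Finset.sum_congr rfl fun π _ => ?_
  simp only [Equiv.Perm.mul_apply]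
  rw [prod_pow_sub_add_swap hij hi hj hba h_off (fun l => x (π l))]
  simp only [Finset.sum_mul, Finset.mul_sum]
  refine Finset.sum_congr rfl fun k _ => ?_
  ring

end UnitTransfer

section Rearrangement

variable {m : ℕ} (p : Fin m → ℕ)

theorem Wpoly_comp_perm (σ : Equiv.Perm (Fin m)) (x : Fin m → ℝ) :
    Wpoly (p ∘ σ) x = Wpoly p x := by
  unfold Wpoly
  rw [← Equiv.sum_comp (Equiv.mulRight σ)]
  congr 1
  exact Finset.sum_congr rfl fun π _ => Equiv.prod_comp σ fun l => x (π l) ^ p l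

theorem Wpoly_sortDesc (x : Fin m → ℝ) : Wpoly (sortDesc p) x = Wpoly p x :=
  Wpoly_comp_perm p (Fin.revPerm.trans (Tuple.sort p)) x

theorem sortDesc_antitone : Antitone (sortDesc p) := fun _ _ h =>
  Tuple.monotone_sort p (Fin.rev_le_rev.mpr h)

end Rearrangement

/-- if p ≺ q satisfies condition (S) with witnesses l₁ < l₂, then
W^q − W^p = Σ_{u<v} (x_u − x_v)² R_{u,v}(x), where R_{u,v} is the explicit polynomial
with non-negative coefficients
R_{u,v}(x) = Σ_{π : π(l₁)=u, π(l₂)=v} Σ_{j=q̂_{l₂}}^{p̂_{l₁}−1}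
  (1/m!)·x_u^j x_v^{p̂_{l₁}+q̂_{l₂}−1−j} Π_{l≠l₁,l₂} x_{π(l)}^{p̂_l}. -/
theorem stmt13 (m : ℕ) (p q : Fin m → ℕ) (hpq : Majorizes p q)
    (l₁ l₂ : Fin m) (hl : l₁ < l₂)
    (h1 : sortDesc q l₁ = sortDesc p l₁ + 1)
    (h2 : sortDesc q l₂ + 1 = sortDesc p l₂)
    (h3 : ∀ l, l ≠ l₁ → l ≠ l₂ → sortDesc q l = sortDesc p l) :
    ∀ x : Fin m → ℝ,
      Wpoly q x - Wpoly p x =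
        ∑ u : Fin m, ∑ v ∈ Finset.univ.filter (fun v => u < v),
          (x u - x v) ^ 2 *
            ∑ π ∈ Finset.univ.filter (fun π : Equiv.Perm (Fin m) => π l₁ = u ∧ π l₂ = v),
              ∑ j ∈ Finset.Ico (sortDesc q l₂) (sortDesc p l₁),
                ((m.factorial : ℝ))⁻¹ * x u ^ j *
                  x v ^ (sortDesc p l₁ + sortDesc q l₂ - 1 - j) *
                  ∏ l ∈ Finset.univ.filter (fun l => l ≠ l₁ ∧ l ≠ l₂),
                    x (π l) ^ sortDesc p l := by
  intro x
  have h_le : sortDesc q l₂ ≤ sortDesc p l₁ :=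
    (Nat.le_succ _).trans (h2.le.trans (sortDesc_antitone p hl.le))
  rw [← Wpoly_sortDesc q, ← Wpoly_sortDesc p]
  exact stmt13_general hl.ne h1 h2 h_le h3 _ x
end
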